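/- arXiv:0809.1643 — 4 statements merged into one kernel-verified Lean document; each statement's English description precedes it below -/
import Mathlib

section
/- Let p < q be reals, let n ≥ 1 be an integer, let f be (2n+1)-times continuously differentiable on [p,q], let x, x+h ∈ [p,q] with h ≠ 0, and let x, x_0, …, x_n be pairwise distinct points of [p,q]. Define a_0 = 1, a_k = −(a_0·N_k(x) + … + a_{k−1}·N_1(x)) for k = 1, …, n, and γ_k = Σ_{m=0}^{n−k} a_m·h^{k+m+1}/(k+m+1) for k = 0, …, n. Then there exist points ξ_{k,j} (0 ≤ j ≤ k ≤ n) in the smallest closed interval containing x, x_0, …, x_n, and a real R with |R| ≤ (sup over the closed interval with endpoints x and x+h of |f^{(n+1)}|)·|h|^{n+2}/(n+2)!, such that ∫_x^{x+h} f(t)dt = Σ_{k=0}^{n} Ñ^{(k)}_{0,1,…,n}[x]·γ_k + ∏_{i=0}^{n}(x − x_i) · Σ_{k=0}^{n} Σ_{j=0}^{k} a_j·(h^{k+1}/(k+1))·f^{(k+n+1−j)}(ξ_{k,j})/(k+n+1−j)! + R. -/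
/-- Divided difference `f[y i, y (i+1), …, y j]` defined by the standard recursion
`f[y_i,…,y_j] = (f[y_{i+1},…,y_j] − f[y_i,…,y_{j−1}])/(y_j − y_i)`. -/
noncomputable def divDiff (f : ℝ → ℝ) (y : ℕ → ℝ) (i j : ℕ) : ℝ :=
  if _h : j ≤ i then f (y i)
  else (divDiff f y (i + 1) j - divDiff f y i (j - 1)) / (y j - y i)
termination_by j - i
decreasing_by all_goals omega

/-- Neville iteration: `neville xs x g i j` is the iterate built from the initial
values `g j` (at node `xs j`) over the nodes `xs j, …, xs (j+i)`. -/
noncomputable def neville (xs : ℕ → ℝ) (x : ℝ) (g : ℕ → ℝ) : ℕ → ℕ → ℝ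
  | 0, j => g j
  | i + 1, j =>
      ((xs (i + 1 + j) - x) * neville xs x g i j - (xs j - x) * neville xs x g i (j + 1)) /
        (xs (i + 1 + j) - xs j)

/-- Aitken iteration with base index `r`: `aitken xs x g r i j` is the iterate
`d_{r,r+1,…,i,j}` (for `r ≤ i < j`) built from the initial values `g j` at the nodes `xs j`. -/
noncomputable def aitken (xs : ℕ → ℝ) (x : ℝ) (g : ℕ → ℝ) (r : ℕ) (i j : ℕ) : ℝ :=
  if _h : i ≤ r then ((xs j - x) * g r - (xs r - x) * g j) / (xs j - xs r)
  else ((xs j - x) * aitken xs x g r (i - 1) i - (xs i - x) * aitken xs x g r (i - 1) j) /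
        (xs j - xs i)
termination_by i
decreasing_by all_goals omega

/-- The full Aitken iterate `d_{r,r+1,…,n}` (equal to the initial value when `n = r`). -/
noncomputable def aitkenLast (xs : ℕ → ℝ) (x : ℝ) (g : ℕ → ℝ) (r n : ℕ) : ℝ :=
  if n ≤ r then g n else aitken xs x g r (n - 1) n

/-- Confluent divided difference `g[x,…,x (m times), xi]`, defined using
`g[x,…,x (m times)] = g^{(m−1)}(x)/(m−1)!` and `g[xi] = g xi`. -/
noncomputable def confDD (g : ℝ → ℝ) (x xi : ℝ) : ℕ → ℝ
  | 0 => g xi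
  | m + 1 => (confDD g x xi m - iteratedDeriv m g x / (Nat.factorial m : ℝ)) / (xi - x)


lemma rolle_finset (p q : ℝ) (C : Set ℝ) (hC : C.OrdConnected) (hCpq : C ⊆ Set.Icc p q)
    (u v : ℝ → ℝ) (huv : ∀ t ∈ Set.Icc p q, HasDerivWithinAt u (v t) (Set.Icc p q) t)
    (S : Finset ℝ) :
    (↑S : Set ℝ) ⊆ C → (∀ t ∈ S, u t = 0) →
    ∃ T : Finset ℝ, S.card ≤ T.card + 1 ∧ (∀ t ∈ T, t ∈ C ∧ t ∉ S ∧ v t = 0 ∧ ∃ w ∈ S, t < w) := by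
  induction S using Finset.induction_on_max with
  | empty => intro _ _; exact ⟨∅, by simp, by simp⟩
  | insert b S' hb ih =>
    intro hS hz
    have hbS : b ∉ S' := fun h => lt_irrefl _ (hb b h)
    obtain ⟨T, hT, hT'⟩ := ih (fun t ht => hS (by simp at ht ⊢; tauto)) (fun t ht => hz t (by simp [ht]))
    rcases S'.eq_empty_or_nonempty with rfl | hne
    · exact ⟨∅, by simp, by simp⟩
    · set M := S'.max' hne
      have hM : M ∈ S' := S'.max'_mem hne
      have hMb : M < b := hb M hM
      have hMC : M ∈ C := hS (by simp [hM])
      have hbC : b ∈ C := hS (by simp)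
      have hsub : Set.Icc M b ⊆ C := hC.out hMC hbC
      obtain ⟨c, hc, hc0⟩ := exists_hasDerivAt_eq_zero (f := u) (f' := v) hMb
        (fun t ht => ((huv t (hCpq (hsub ht))).continuousWithinAt).mono (hsub.trans hCpq))
        (by rw [hz M (by simp [hM]), hz b (by simp)])
        (fun t ht => (huv t (hCpq (hsub (Set.Ioo_subset_Icc_self ht)))).hasDerivAt
          (Icc_mem_nhds ((hCpq hMC).1.trans_lt ht.1) (ht.2.trans_le (hCpq hbC).2)))
      have hlt : ∀ w ∈ S', w < c := fun w hw => (S'.le_max' w hw).trans_lt hc.1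
      refine ⟨insert c T, ?_, ?_⟩
      · rw [Finset.card_insert_of_notMem hbS, Finset.card_insert_of_notMem]
        · omega
        · intro h
          obtain ⟨_, _, _, w, hw, hw'⟩ := hT' c h
          exact absurd (hlt w hw) (not_lt.2 hw'.le)
      · intro t ht
        rw [Finset.mem_insert] at ht
        rcases ht with rfl | ht
        · refine ⟨hsub (Set.Ioo_subset_Icc_self hc), ?_, hc0, b, by simp, hc.2⟩
          rw [Finset.mem_insert]
          rintro (h | h)
          · exact absurd hc.2 (by simp [h])
          · exact lt_irrefl _ (hlt _ h)
        · obtain ⟨h1, h2, h3, w, hw, hw'⟩ := hT' t ht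
          refine ⟨h1, ?_, h3, w, by simp [hw], hw'⟩
          rw [Finset.mem_insert]
          rintro (h | h)
          · exact absurd (hw'.trans (hb w hw)) (by simp [h])
          · exact h2 h

lemma rolle_simple (p q : ℝ) (C : Set ℝ) (hC : C.OrdConnected) (hCpq : C ⊆ Set.Icc p q) (s : ℕ) :
    ∀ (D : ℕ → ℝ → ℝ) (_ : ∀ i < s, ∀ t ∈ Set.Icc p q,
      HasDerivWithinAt (D i) (D (i + 1) t) (Set.Icc p q) t)
    (S : Finset ℝ) (_ : (↑S : Set ℝ) ⊆ C) (_ : s + 1 ≤ S.card) (_ : ∀ t ∈ S, D 0 t = 0),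
    ∃ ξ ∈ C, D s ξ = 0 := by
  induction s with
  | zero =>
    intro D _ S hS hc hz
    obtain ⟨t, ht⟩ := Finset.card_pos.1 (show 0 < S.card by omega)
    exact ⟨t, hS ht, hz t ht⟩
  | succ s ih =>
    intro D hD S hS hc hz
    obtain ⟨T, hT, hT'⟩ := rolle_finset p q C hC hCpq (D 0) (D 1) (hD 0 (by omega)) S hS hz
    exact ih (fun i => D (i + 1)) (fun i hi => hD (i + 1) (by omega)) T (fun t ht => (hT' t ht).1)
      (by omega) (fun t ht => (hT' t ht).2.2.1)

lemma rolle_mult (p q : ℝ) (C : Set ℝ) (hC : C.OrdConnected) (hCpq : C ⊆ Set.Icc p q) (s m : ℕ)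
    (x : ℝ) :
    ∀ (D : ℕ → ℝ → ℝ) (_ : ∀ i < s + m, ∀ t ∈ Set.Icc p q,
      HasDerivWithinAt (D i) (D (i + 1) t) (Set.Icc p q) t)
    (S : Finset ℝ) (_ : (↑S : Set ℝ) ⊆ C) (_ : s + 1 ≤ S.card) (_ : ∀ t ∈ S, D 0 t = 0)
    (_ : x ∈ S) (_ : ∀ i ≤ m, D i x = 0),
    ∃ ξ ∈ C, D (s + m) ξ = 0 := by
  induction m with
  | zero =>
    intro D hD S hS hc hz _ _
    exact rolle_simple p q C hC hCpq s D hD S hS hc hz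
  | succ m ih =>
    intro D hD S hS hc hz hx hm
    obtain ⟨T, hT, hT'⟩ := rolle_finset p q C hC hCpq (D 0) (D 1) (hD 0 (by omega)) S hS hz
    have hxT : x ∉ T := fun h => (hT' x h).2.1 hx
    refine ih (fun i => D (i + 1)) (fun i hi => hD (i + 1) (by omega)) (insert x T) ?_ ?_ ?_ (by simp) ?_
    · intro t ht
      simp only [Finset.coe_insert, Set.mem_insert_iff, Finset.mem_coe] at ht
      rcases ht with rfl | ht
      · exact hS hx
      · exact (hT' t ht).1
    · rw [Finset.card_insert_of_notMem hxT]; omega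
    · intro t ht
      rw [Finset.mem_insert] at ht
      rcases ht with rfl | ht
      · exact hm 1 (by omega)
      · exact (hT' t ht).2.2.1
    · intro i hi; exact hm (i + 1) (by omega)

open Polynomial in
lemma iter_deriv_top (H : ℝ[X]) (d : ℕ) (hd : H.natDegree ≤ d) :
    derivative^[d] H = C ((d.factorial : ℝ) * H.coeff d) := by
  ext j
  rw [coeff_iterate_derivative, coeff_C]
  split_ifs with h
  · subst h; simp [Nat.descFactorial_self]
  · rw [coeff_eq_zero_of_natDegree_lt (by omega)]; simp

open Polynomial in
lemma iter_deriv_zero (H : ℝ[X]) (d : ℕ) :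
    (derivative^[d] H).eval 0 = (d.factorial : ℝ) * H.coeff d := by
  rw [← coeff_zero_eq_eval_zero, coeff_iterate_derivative]
  simp [Nat.descFactorial_self]

open Polynomial in
lemma hermite_core (p q : ℝ) (C : Set ℝ) (hC : C.OrdConnected) (hCpq : C ⊆ Set.Icc p q) (s m : ℕ)
    (x : ℝ) (D : ℕ → ℝ → ℝ) (hD : ∀ i < s + m, ∀ t ∈ Set.Icc p q,
      HasDerivWithinAt (D i) (D (i + 1) t) (Set.Icc p q) t)
    (S : Finset ℝ) (hS : (↑S : Set ℝ) ⊆ C) (hc : s + 1 ≤ S.card) (H : ℝ[X])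
    (hz : ∀ t ∈ S, D 0 t = H.eval (t - x))
    (hx : x ∈ S) (hm : ∀ i ≤ m, D i x = (i.factorial : ℝ) * H.coeff i) (hH : H.natDegree ≤ s + m) :
    ∃ ξ ∈ C, D (s + m) ξ = ((s + m).factorial : ℝ) * H.coeff (s + m) := by
  obtain ⟨ξ, hξ, h⟩ := rolle_mult p q C hC hCpq s m x
    (fun i t => D i t - (derivative^[i] H).eval (t - x)) (fun i hi t ht => by
      refine (hD i hi t ht).sub ?_
      rw [Function.iterate_succ_apply']
      have := (derivative^[i] H).hasDerivAt (t - x)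
      have h2 := (this.comp t ((hasDerivAt_id t).sub_const x)).hasDerivWithinAt (s := Set.Icc p q)
      rw [mul_one] at h2
      exact h2) S hS hc
    (fun t ht => by simp [hz t ht]) hx (fun i hi => by simp [hm i hi, iter_deriv_zero])
  refine ⟨ξ, hξ, ?_⟩
  have h' : D (s + m) ξ - (derivative^[s + m] H).eval (ξ - x) = 0 := h
  rw [iter_deriv_top H _ hH, eval_C] at h'
  linarith

open Polynomial in
lemma neville_eq (X : ℕ → ℝ) (x : ℝ) (g : ℕ → ℝ) (n : ℕ)
    (hXX : ∀ i j, i ≤ n → j ≤ n → i ≠ j → X i ≠ X j) (i : ℕ) : ∀ j, j + i ≤ n →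
    neville X x g i j = (Lagrange.interpolate (Finset.Icc j (j + i)) (fun l => X l - x) g).eval 0 := by
  induction i with
  | zero => intro j _; simp [neville]
  | succ i ih =>
    intro j hj
    have hne : X (i + 1 + j) - X j ≠ 0 := sub_ne_zero.2 (hXX _ _ (by omega) (by omega) (by omega))
    rw [neville, ih j (by omega), ih (j + 1) (by omega),
      Lagrange.interpolate_eq_add_interpolate_erase (s := Finset.Icc j (j + (i + 1)))
        (i := j) (j := j + (i + 1)) _ ?_ (by simp) (by simp) (by omega)]
    · have e1 : (Finset.Icc j (j + (i + 1))).erase (j + (i + 1)) = Finset.Icc j (j + i) := by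
        ext l; simp; omega
      have e2 : (Finset.Icc j (j + (i + 1))).erase j = Finset.Icc (j + 1) (j + 1 + i) := by
        ext l; simp; omega
      rw [e1, e2]
      have e3 : j + (i + 1) = i + 1 + j := by omega
      have hne' : X j - X (i + 1 + j) ≠ 0 := by rw [← neg_sub]; exact neg_ne_zero.2 hne
      simp only [Lagrange.basisDivisor, eval_add, eval_mul, eval_C, eval_sub, eval_X, e3]
      have e4 : X j - x - (X (i + 1 + j) - x) = -(X (i + 1 + j) - X j) := by ring
      have e5 : X (i + 1 + j) - x - (X j - x) = (X (i + 1 + j) - X j) := by ring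
      rw [e4, e5]
      field_simp
      ring
    · intro a ha b hb hab
      simp only [Finset.coe_Icc, Set.mem_Icc] at ha hb
      by_contra h
      exact hXX a b (by omega) (by omega) h (by simpa using hab)

lemma fam_deriv (p q : ℝ) (hpq : p < q) (N : ℕ) (f : ℝ → ℝ) (hf : ContDiffOn ℝ (N : ℕ) f (Set.Icc p q))
    (i : ℕ) (hi : i < N) (t : ℝ) (ht : t ∈ Set.Icc p q) :
    HasDerivWithinAt (iteratedDerivWithin i f (Set.Icc p q))
      (iteratedDerivWithin (i + 1) f (Set.Icc p q) t) (Set.Icc p q) t := by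
  rw [iteratedDerivWithin_succ]
  exact ((hf.differentiableOn_iteratedDerivWithin (by exact_mod_cast hi)
    (uniqueDiffOn_Icc hpq)) t ht).hasDerivWithinAt

open Polynomial in
lemma diff_formula (p q : ℝ) (hpq : p < q) (n k : ℕ) (hk : k ≤ n)
    (f : ℝ → ℝ) (hf : ContDiffOn ℝ (2 * n + 1 : ℕ) f (Set.Icc p q))
    (x : ℝ) (hx : x ∈ Set.Icc p q)
    (X : ℕ → ℝ) (hX : ∀ i ≤ n, X i ∈ Set.Icc p q)
    (hxX : ∀ i ≤ n, X i ≠ x)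
    (hXX : ∀ i j, i ≤ n → j ≤ n → i ≠ j → X i ≠ X j)
    (c : ℕ → ℝ) (hc : ∀ i, iteratedDerivWithin i f (Set.Icc p q) x = (i.factorial : ℝ) * c i) :
    ∃ ξ ∈ convexHull ℝ (insert x (X '' Set.Iic n)),
      c k + ∑ i ∈ Finset.range k, c i * neville X x (fun l => 1 / (X l - x) ^ (k - i)) n 0
      = neville X x (fun l => f (X l) / (X l - x) ^ k) n 0
        + (∏ i ∈ Finset.range (n + 1), (x - X i)) *
          (iteratedDerivWithin (k + n + 1) f (Set.Icc p q) ξ / ((k + n + 1).factorial : ℝ)) := by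
  have hsub : insert x (X '' Set.Iic n) ⊆ Set.Icc p q := by
    rintro t (rfl | ⟨i, hi, rfl⟩)
    · exact hx
    · exact hX i hi
  have hCpq : convexHull ℝ (insert x (X '' Set.Iic n)) ⊆ Set.Icc p q :=
    convexHull_min hsub (convex_Icc p q)
  set Y : ℕ → ℝ := fun l => X l - x with hY
  set I : Finset ℕ := Finset.Icc 0 (0 + n) with hI
  have hIr : I = Finset.range (n + 1) := by ext l; simp [hI]
  have hIle : ∀ l ∈ I, l ≤ n := by intro l hl; simpa [hI] using hl
  have hInj : Set.InjOn Y I := by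
    intro a ha b hb hab
    by_contra h
    exact hXX a b (hIle a ha) (hIle b hb) h (by simpa [hY] using hab)
  set g : ℕ → ℝ := fun l => f (X l) / (X l - x) ^ k - ∑ i ∈ Finset.range k, c i * (1 / (X l - x) ^ (k - i))
    with hg
  set P : ℝ := ∏ i ∈ Finset.range (n + 1), (x - X i) with hP
  have hP0 : P ≠ 0 := Finset.prod_ne_zero_iff.2 fun i hi =>
    sub_ne_zero.2 (hxX i (by simpa [Nat.lt_succ_iff] using hi)).symm
  set W := Lagrange.interpolate I Y g with hW
  have hW0 : W.eval 0 = neville X x (fun l => f (X l) / (X l - x) ^ k) n 0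
      - ∑ i ∈ Finset.range k, c i * neville X x (fun l => 1 / (X l - x) ^ (k - i)) n 0 := by
    rw [neville_eq X x _ n hXX n 0 (by omega)]
    have : ∀ r, neville X x (fun l => 1 / (X l - x) ^ r) n 0 = _ :=
      fun r => neville_eq X x _ n hXX n 0 (by omega)
    simp only [this]
    have hgg : g = (fun l => f (X l) / (X l - x) ^ k) - ∑ i ∈ Finset.range k,
        c i • (fun l => (1 / (X l - x) ^ (k - i) : ℝ)) := by
      ext l; simp [hg]
    rw [hW, hgg, map_sub, map_sum]
    simp only [map_smul, eval_sub, eval_finsetSum, eval_smul, smul_eq_mul]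
    rfl
  set K : ℝ := (c k - W.eval 0) / P with hK
  set Nd := Lagrange.nodal I Y with hNd
  have hcard : I.card = n + 1 := by simp [hI]
  have hNdeg : Nd.natDegree = n + 1 := by rw [hNd, Lagrange.natDegree_nodal, hcard]
  have hNm : Nd.Monic := Lagrange.nodal_monic
  have hNc : Nd.coeff (n + 1) = 1 := by rw [← hNdeg]; exact hNm.coeff_natDegree
  have hN0 : Nd.eval 0 = P := by
    rw [hNd, Lagrange.eval_nodal, hP, hIr]
    exact Finset.prod_congr rfl fun i _ => by simp [hY]
  have hWdeg : W.degree < ((n + 1 : ℕ) : WithBot ℕ) := by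
    rw [← hcard]; exact Lagrange.degree_interpolate_lt _ hInj
  have hWc : W.coeff (n + 1) = 0 := coeff_eq_zero_of_degree_lt hWdeg
  set V : ℝ[X] := W + Polynomial.C K * Nd with hV
  have hV0 : V.coeff 0 = c k := by
    rw [coeff_zero_eq_eval_zero, hV, eval_add, eval_mul, eval_C, hN0, hK]
    field_simp
    ring
  have hVdeg : V.natDegree ≤ n + 1 := by
    refine natDegree_add_le_of_degree_le ?_ ?_
    · exact natDegree_le_of_degree_le hWdeg.le
    · exact (natDegree_C_mul_le _ _).trans hNdeg.le
  have hVc : V.coeff (n + 1) = K := by simp [hV, hWc, hNc]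
  have hVe : ∀ l ≤ n, V.eval (X l - x) = g l := by
    intro l hl
    have hlI : l ∈ I := by simp [hI, hl]
    have h1 : W.eval (Y l) = g l := Lagrange.eval_interpolate_at_node _ hInj hlI
    have h2 : Nd.eval (Y l) = 0 := Lagrange.eval_nodal_at_node hlI
    change V.eval (Y l) = g l
    simp [hV, h1, h2]
  set H : ℝ[X] := (∑ i ∈ Finset.range k, Polynomial.C (c i) * Polynomial.X ^ i) + Polynomial.X ^ k * V with hH
  have hHlow : ∀ i ≤ k, H.coeff i = c i := by
    intro i hi
    rw [hH, coeff_add, finsetSum_coeff, coeff_X_pow_mul']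
    simp only [coeff_C_mul_X_pow]
    rcases hi.lt_or_eq with h | rfl
    · rw [Finset.sum_ite_eq]; simp [h, Nat.not_le.2 h]
    · simp [hV0]
  have hHtop : H.coeff (n + 1 + k) = K := by
    rw [hH, coeff_add, finsetSum_coeff, coeff_X_pow_mul, hVc]
    simp only [coeff_C_mul_X_pow]
    rw [Finset.sum_ite_eq]; simp
  have hHdeg : H.natDegree ≤ n + 1 + k := by
    refine natDegree_add_le_of_degree_le ?_ ?_
    · refine natDegree_sum_le_of_forall_le _ _ fun i hi => ?_
      refine (natDegree_C_mul_X_pow_le _ _).trans ?_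
      have := Finset.mem_range.1 hi
      omega
    · refine natDegree_mul_le.trans ?_
      simp only [natDegree_X_pow]; omega
  have hXinj : Set.InjOn X (Finset.range (n + 1)) := by
    intro a ha b hb hab
    by_contra h
    simp at ha hb
    exact hXX a b (by omega) (by omega) h hab
  set S : Finset ℝ := insert x ((Finset.range (n + 1)).image X) with hS
  have hScard : S.card = n + 1 + 1 := by
    rw [hS, Finset.card_insert_of_notMem, Finset.card_image_of_injOn hXinj, Finset.card_range]
    simp only [Finset.mem_image, Finset.mem_range, not_exists, not_and]
    intro i hi
    exact hxX i (by omega)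
  obtain ⟨ξ, hξ, hξe⟩ := hermite_core p q (convexHull ℝ (insert x (X '' Set.Iic n)))
    (convex_convexHull ℝ _).ordConnected hCpq (n + 1) k x
    (fun i => iteratedDerivWithin i f (Set.Icc p q))
    (fun i hi t ht => fam_deriv p q hpq (2 * n + 1) f hf i (by omega) t ht) S
    (by
      refine Set.Subset.trans ?_ (subset_convexHull ℝ _)
      intro t ht
      simp only [hS, Finset.coe_insert, Finset.coe_image, Finset.coe_range] at ht
      rcases ht with rfl | ⟨i, hi, rfl⟩
      · simp
      · exact Or.inr ⟨i, by simpa [Nat.lt_succ_iff] using hi, rfl⟩)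
    hScard.ge H
    (by
      intro t ht
      simp only [hS, Finset.mem_insert, Finset.mem_image, Finset.mem_range] at ht
      rcases ht with rfl | ⟨l, hl, rfl⟩
      · rw [sub_self, ← coeff_zero_eq_eval_zero, hHlow 0 (by omega)]
        simpa using hc 0
      · have hne : X l - x ≠ 0 := sub_ne_zero.2 (hxX l (by omega))
        simp only [iteratedDerivWithin_zero, hH, eval_add, eval_mul, eval_finsetSum, eval_pow,
          eval_X, eval_C, hVe l (by omega : l ≤ n), hg, mul_sub, Finset.mul_sum]
        rw [mul_div_cancel₀ _ (pow_ne_zero _ hne)]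
        have : ∀ i ∈ Finset.range k, (X l - x) ^ k * (c i * (1 / (X l - x) ^ (k - i)))
            = c i * (X l - x) ^ i := by
          intro i hi
          have := Finset.mem_range.1 hi
          have e : (X l - x) ^ k = (X l - x) ^ (k - i) * (X l - x) ^ i := by
            rw [← pow_add]; congr 1; omega
          rw [e]
          field_simp
        rw [Finset.sum_congr rfl this]; ring)
    (by simp [hS])
    (fun i hi => by rw [hHlow i hi]; exact hc i) hHdeg
  refine ⟨ξ, hξ, ?_⟩
  have e : n + 1 + k = k + n + 1 := by omega
  rw [hHtop, e] at hξe
  have hfac : ((k + n + 1).factorial : ℝ) ≠ 0 := by positivity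
  have : iteratedDerivWithin (k + n + 1) f (Set.Icc p q) ξ / ((k + n + 1).factorial : ℝ) = K := by
    rw [div_eq_iff hfac, mul_comm]; exact hξe
  rw [this, hK, mul_div_cancel₀ _ hP0, hW0]
  ring

open Polynomial in
lemma int_taylor (p q : ℝ) (hpq : p < q) (n : ℕ) 
    (f : ℝ → ℝ) (hf : ContDiffOn ℝ (n + 1 : ℕ) f (Set.Icc p q))
    (x h : ℝ) (hh : h ≠ 0) (hx : x ∈ Set.Icc p q) (hxh : x + h ∈ Set.Icc p q)
    (c : ℕ → ℝ) (hc : ∀ i, iteratedDerivWithin i f (Set.Icc p q) x = (i.factorial : ℝ) * c i) :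
    ∃ ξ ∈ Set.uIcc x (x + h), (∫ s in x..(x + h), f s) =
      (∑ k ∈ Finset.range (n + 1), c k * (h ^ (k + 1) / (k + 1 : ℝ)))
      + iteratedDerivWithin (n + 1) f (Set.Icc p q) ξ * h ^ (n + 2) / ((n + 2).factorial : ℝ) := by
  set D : ℕ → ℝ → ℝ := fun i => Nat.casesOn i (fun t => ∫ s in x..t, f s)
    (fun i => iteratedDerivWithin i f (Set.Icc p q)) with hD
  have hcont : ContinuousOn f (Set.Icc p q) := hf.continuousOn
  have hder : ∀ i < 1 + (n + 1), ∀ t ∈ Set.Icc p q,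
      HasDerivWithinAt (D i) (D (i + 1) t) (Set.Icc p q) t := by
    intro i hi t ht
    cases i with
    | zero =>
      simp only [hD, iteratedDerivWithin_zero]
      have : Fact (t ∈ Set.Icc p q) := ⟨ht⟩
      refine intervalIntegral.integral_hasDerivWithinAt_right ?_ ?_ (hcont t ht)
      · exact (hcont.mono (Set.uIcc_subset_Icc hx ht)).intervalIntegrable
      · exact hcont.stronglyMeasurableAtFilter_nhdsWithin measurableSet_Icc t
    | succ i => exact fam_deriv p q hpq (n + 1) f hf i (by omega) t ht
  set T : ℝ[X] := ∑ k ∈ Finset.range (n + 1), Polynomial.C (c k / (k + 1)) * Polynomial.X ^ (k + 1) with hT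
  set A : ℝ := ((∫ s in x..(x + h), f s) - T.eval h) / h ^ (n + 2) with hA
  set H : ℝ[X] := T + Polynomial.C A * Polynomial.X ^ (n + 2) with hH
  have hTe : T.eval h = ∑ k ∈ Finset.range (n + 1), c k * (h ^ (k + 1) / (k + 1 : ℝ)) := by
    simp only [hT, eval_finsetSum, eval_mul, eval_C, eval_pow, eval_X]
    exact Finset.sum_congr rfl fun i _ => by ring
  have hTc : ∀ i, T.coeff i = if 1 ≤ i ∧ i ≤ n + 1 then c (i - 1) / i else 0 := by
    intro i
    simp only [hT, finsetSum_coeff, coeff_C_mul_X_pow]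
    cases i with
    | zero => simp
    | succ i => 
      simp only [add_left_inj]
      rw [Finset.sum_ite_eq]
      simp [Nat.lt_succ_iff]
  have hHe : H.eval h = ∫ s in x..(x + h), f s := by
    simp only [hH, eval_add, eval_mul, eval_C, eval_pow, eval_X, hA]
    field_simp
    ring
  obtain ⟨ξ, hξ, hξe⟩ := hermite_core p q (Set.uIcc x (x + h)) Set.ordConnected_uIcc
    (Set.uIcc_subset_Icc hx hxh) 1 (n + 1) x D hder {x, x + h}
    (by intro t ht; simp at ht; rcases ht with rfl | rfl <;> simp)
    (by rw [Finset.card_pair (by simpa using hh)]) H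
    (by
      intro t ht
      simp only [Finset.mem_insert, Finset.mem_singleton] at ht
      rcases ht with rfl | rfl
      · rw [sub_self, ← coeff_zero_eq_eval_zero]; simp [hD, hH, hTc]
      · rw [add_sub_cancel_left, hHe]; rfl)
    (by simp)
    (by
      intro i hi
      cases i with
      | zero => simp [hD, hH, hTc]
      | succ i =>
        have h1 : H.coeff (i + 1) = c i / (i + 1) := by
          rw [hH, coeff_add, hTc, coeff_C_mul_X_pow, if_pos ⟨by omega, hi⟩, if_neg (by omega)]
          simp
        rw [h1]
        simp only [hD, hc, Nat.factorial_succ]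
        push_cast
        field_simp)
    (by
      refine natDegree_add_le_of_degree_le ?_ ?_
      · refine natDegree_sum_le_of_forall_le _ _ fun i hi => ?_
        refine (natDegree_C_mul_X_pow_le _ _).trans ?_
        have := Finset.mem_range.1 hi
        omega
      · refine (natDegree_C_mul_X_pow_le _ _).trans ?_
        omega)
  refine ⟨ξ, hξ, ?_⟩
  have e : 1 + (n + 1) = n + 2 := by omega
  rw [e] at hξe
  have h1 : H.coeff (n + 2) = A := by
    rw [hH, coeff_add, hTc, coeff_C_mul_X_pow, if_neg (by omega), if_pos rfl, zero_add]
  rw [h1] at hξe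
  have h2 : iteratedDerivWithin (n + 1) f (Set.Icc p q) ξ = ((n + 2).factorial : ℝ) * A := hξe
  rw [h2, ← hTe, ← hHe, hH]
  have hfac : ((n + 2).factorial : ℝ) ≠ 0 := by positivity
  simp only [eval_add, eval_mul, eval_C, eval_pow, eval_X]
  field_simp

/-- Inversion of the triangular system. -/
lemma invert (n : ℕ) (a N c b : ℕ → ℝ) (ha0 : a 0 = 1)
    (hak : ∀ m, 1 ≤ m → m ≤ n → a m = -(∑ j ∈ Finset.range m, a j * N (m - j)))
    (hb : ∀ k ≤ n, c k + ∑ i ∈ Finset.range k, c i * N (k - i) = b k) :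
    ∀ k ≤ n, c k = ∑ j ∈ Finset.range (k + 1), a j * b (k - j) := by
  set N' : ℕ → ℝ := fun r => if r = 0 then 1 else N r with hN'
  have hA : ∀ m, m ≤ n → ∑ j ∈ Finset.range (m + 1), a j * N' (m - j) = if m = 0 then 1 else 0 := by
    intro m hm
    rw [Finset.sum_range_succ]
    have : ∑ j ∈ Finset.range m, a j * N' (m - j) = ∑ j ∈ Finset.range m, a j * N (m - j) := by
      refine Finset.sum_congr rfl fun j hj => ?_
      have := Finset.mem_range.1 hj
      simp only [hN', if_neg (show m - j ≠ 0 by omega)]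
    rw [this]
    by_cases h : m = 0
    · subst h; simp [ha0, hN']
    · have := hak m (by omega) hm
      simp only [hN', Nat.sub_self, if_true, if_neg h]
      linarith
  have hB : ∀ k ≤ n, b k = ∑ i ∈ Finset.range (k + 1), c i * N' (k - i) := by
    intro k hk
    rw [Finset.sum_range_succ, ← hb k hk]
    have : ∑ j ∈ Finset.range k, c j * N' (k - j) = ∑ j ∈ Finset.range k, c j * N (k - j) := by
      refine Finset.sum_congr rfl fun j hj => ?_
      have := Finset.mem_range.1 hj
      simp only [hN', if_neg (show k - j ≠ 0 by omega)]
    rw [this]; simp [hN']; ring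
  -- power series
  intro k hk
  have key : ∀ m ≤ n, PowerSeries.coeff m (PowerSeries.mk a * PowerSeries.mk N') =
      PowerSeries.coeff m (1 : PowerSeries ℝ) := by
    intro m hm
    rw [PowerSeries.coeff_mul, Finset.Nat.sum_antidiagonal_eq_sum_range_succ_mk, PowerSeries.coeff_one]
    simpa using hA m hm
  have h2 : ∑ j ∈ Finset.range (k + 1), a j * b (k - j) =
      PowerSeries.coeff k (PowerSeries.mk a * (PowerSeries.mk N' * PowerSeries.mk c)) := by
    rw [PowerSeries.coeff_mul, Finset.Nat.sum_antidiagonal_eq_sum_range_succ_mk]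
    refine Finset.sum_congr rfl fun j hj => ?_
    rw [mul_comm (PowerSeries.mk N'), PowerSeries.coeff_mul,
      Finset.Nat.sum_antidiagonal_eq_sum_range_succ_mk, hB (k - j) (by omega)]
    simp
  rw [h2, ← mul_assoc, PowerSeries.coeff_mul]
  have h3 : c k = PowerSeries.coeff k (1 * PowerSeries.mk c) := by simp
  rw [h3, PowerSeries.coeff_mul]
  refine Finset.sum_congr rfl fun ij hij => ?_
  rw [key ij.1 ((by have := Finset.HasAntidiagonal.mem_antidiagonal.1 hij; omega : ij.1 ≤ k).trans hk)]

theorem stmt_8 (p q : ℝ) (hpq : p < q) (n : ℕ) (hn : 1 ≤ n)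
    (f : ℝ → ℝ) (hf : ContDiffOn ℝ (2 * n + 1 : ℕ) f (Set.Icc p q))
    (x h : ℝ) (hh : h ≠ 0) (hx : x ∈ Set.Icc p q) (hxh : x + h ∈ Set.Icc p q)
    (X : ℕ → ℝ) (hX : ∀ i ≤ n, X i ∈ Set.Icc p q)
    (hxX : ∀ i ≤ n, X i ≠ x)
    (hXX : ∀ i j, i ≤ n → j ≤ n → i ≠ j → X i ≠ X j)
    (a : ℕ → ℝ) (ha0 : a 0 = 1)
    (hak : ∀ m, 1 ≤ m → m ≤ n →
      a m = -(∑ j ∈ Finset.range m, a j * neville X x (fun i => 1 / (X i - x) ^ (m - j)) n 0))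
    (γ : ℕ → ℝ)
    (hγ : ∀ k ≤ n, γ k = ∑ m ∈ Finset.range (n - k + 1), a m * h ^ (k + m + 1) / (k + m + 1 : ℝ)) :
    ∃ ξ : ℕ → ℕ → ℝ,
      (∀ k ≤ n, ∀ j ≤ k, ξ k j ∈ convexHull ℝ (insert x (X '' Set.Iic n))) ∧
      ∃ R : ℝ,
        |R| ≤ sSup ((fun s => |iteratedDerivWithin (n + 1) f (Set.Icc p q) s|) '' Set.uIcc x (x + h))
                * |h| ^ (n + 2) / (Nat.factorial (n + 2) : ℝ) ∧
        (∫ s in x..(x + h), f s)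
          = (∑ k ∈ Finset.range (n + 1), neville X x (fun i => f (X i) / (X i - x) ^ k) n 0 * γ k)
            + (∏ i ∈ Finset.range (n + 1), (x - X i))
              * (∑ k ∈ Finset.range (n + 1), ∑ j ∈ Finset.range (k + 1),
                  a j * (h ^ (k + 1) / (k + 1 : ℝ))
                    * iteratedDerivWithin (k + n + 1 - j) f (Set.Icc p q) (ξ k j)
                      / (Nat.factorial (k + n + 1 - j) : ℝ))
            + R := by
  set c : ℕ → ℝ := fun i => iteratedDerivWithin i f (Set.Icc p q) x / (i.factorial : ℝ) with hcdef
  have hc : ∀ i, iteratedDerivWithin i f (Set.Icc p q) x = (i.factorial : ℝ) * c i := by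
    intro i
    have : (i.factorial : ℝ) ≠ 0 := by positivity
    simp only [hcdef]
    field_simp
  have hdf : ∀ k, ∃ ξ, k ≤ n → (ξ ∈ convexHull ℝ (insert x (X '' Set.Iic n)) ∧
      c k + ∑ i ∈ Finset.range k, c i * neville X x (fun l => 1 / (X l - x) ^ (k - i)) n 0
      = neville X x (fun l => f (X l) / (X l - x) ^ k) n 0
        + (∏ i ∈ Finset.range (n + 1), (x - X i)) *
          (iteratedDerivWithin (k + n + 1) f (Set.Icc p q) ξ / ((k + n + 1).factorial : ℝ))) := by
    intro k
    by_cases hk : k ≤ n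
    · obtain ⟨ξ, h1, h2⟩ := diff_formula p q hpq n k hk f hf x hx X hX hxX hXX c hc
      exact ⟨ξ, fun _ => ⟨h1, h2⟩⟩
    · exact ⟨0, fun h => absurd h hk⟩
  choose η hη using hdf
  have hf' : ContDiffOn ℝ (n + 1 : ℕ) f (Set.Icc p q) :=
    hf.of_le (by exact_mod_cast (by omega : n + 1 ≤ 2 * n + 1))
  obtain ⟨ζ, hζ, hint⟩ := int_taylor p q hpq n f hf' x h hh hx hxh c hc
  refine ⟨fun k j => η (k - j), fun k hk j hj => (hη (k - j) (by omega)).1,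
    iteratedDerivWithin (n + 1) f (Set.Icc p q) ζ * h ^ (n + 2) / ((n + 2).factorial : ℝ), ?_, ?_⟩
  · rw [abs_div, abs_mul, abs_pow, Nat.abs_cast]
    gcongr
    refine le_csSup ?_ ⟨ζ, hζ, rfl⟩
    refine (isCompact_uIcc.image_of_continuousOn ?_).bddAbove
    refine ContinuousOn.abs ?_
    exact (hf'.continuousOn_iteratedDerivWithin le_rfl (uniqueDiffOn_Icc hpq)).mono
      (Set.uIcc_subset_Icc hx hxh)
  · rw [hint]
    congr 1
    have hinv := invert n a (fun r => neville X x (fun l => 1 / (X l - x) ^ r) n 0) c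
      (fun k => neville X x (fun l => f (X l) / (X l - x) ^ k) n 0
        + (∏ i ∈ Finset.range (n + 1), (x - X i)) *
          (iteratedDerivWithin (k + n + 1) f (Set.Icc p q) (η k) / ((k + n + 1).factorial : ℝ)))
      ha0 hak (fun k hk => (hη k hk).2)
    set P : ℝ := ∏ i ∈ Finset.range (n + 1), (x - X i)
    set B : ℕ → ℝ := fun k => neville X x (fun l => f (X l) / (X l - x) ^ k) n 0
    have e1 : ∑ k ∈ Finset.range (n + 1), c k * (h ^ (k + 1) / (k + 1 : ℝ)) =
        ∑ k ∈ Finset.range (n + 1), ∑ j ∈ Finset.range (k + 1),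
          (a j * B (k - j) * (h ^ (k + 1) / (k + 1 : ℝ))
          + P * (a j * (h ^ (k + 1) / (k + 1 : ℝ))
                    * iteratedDerivWithin (k + n + 1 - j) f (Set.Icc p q) (η (k - j))
                      / (Nat.factorial (k + n + 1 - j) : ℝ))) := by
      refine Finset.sum_congr rfl fun k hk => ?_
      rw [hinv k (by simpa [Nat.lt_succ_iff] using hk), Finset.sum_mul]
      refine Finset.sum_congr rfl fun j hj => ?_
      have : k - j + n + 1 = k + n + 1 - j := by
        have := Finset.mem_range.1 hj
        omega
      simp only [this, B]
      ring
    rw [e1]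
    simp only [Finset.sum_add_distrib, ← Finset.mul_sum]
    congr 1
    have e2 : ∀ k ∈ Finset.range (n + 1), B k * γ k = ∑ m ∈ Finset.range (n + 1 - k),
        a m * B k * (h ^ (k + m + 1) / (k + m + 1 : ℝ)) := by
      intro k hk
      have hk' := Finset.mem_range.1 hk
      rw [hγ k (by omega), Finset.mul_sum, show n - k + 1 = n + 1 - k by omega]
      exact Finset.sum_congr rfl fun m _ => by ring
    rw [Finset.sum_congr rfl e2]
    rw [Finset.sum_sigma', Finset.sum_sigma']
    refine Finset.sum_bij' (fun s _ => ⟨s.1 - s.2, s.2⟩) (fun s _ => ⟨s.1 + s.2, s.2⟩) ?_ ?_ ?_ ?_ ?_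
    · rintro ⟨k, j⟩ hs
      simp only [Finset.mem_sigma, Finset.mem_range] at hs ⊢
      omega
    · rintro ⟨k, j⟩ hs
      simp only [Finset.mem_sigma, Finset.mem_range] at hs ⊢
      omega
    · rintro ⟨k, j⟩ hs
      simp only [Finset.mem_sigma, Finset.mem_range] at hs
      simp only [Sigma.mk.injEq, heq_eq_eq, and_true]
      omega
    · rintro ⟨k, j⟩ hs
      simp
    · rintro ⟨k, j⟩ hs
      simp only [Finset.mem_sigma, Finset.mem_range] at hs
      have e : k - j + j = k := by omega
      have e' : ((k - j : ℕ) : ℝ) + (j : ℝ) = k := by exact_mod_cast e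
      simp only [e, e']
end

section
/- Let p < q be reals, let n ≥ 1 be an integer, let f be (2n+1)-times continuously differentiable on [p,q], let x, x+h ∈ [p,q] with h ≠ 0, and let x, x_0, …, x_n be pairwise distinct points of [p,q]. Define a_0 = 1, a_k = −(a_0·A_k(x) + … + a_{k−1}·A_1(x)) for k = 1, …, n, and γ_k = Σ_{m=0}^{n−k} a_m·h^{k+m+1}/(k+m+1) for k = 0, …, n. Then there exist points ξ_{k,j} (0 ≤ j ≤ k ≤ n) in the smallest closed interval containing x, x_0, …, x_n, and a real R with |R| ≤ (sup over the closed interval with endpoints x and x+h of |f^{(n+1)}|)·|h|^{n+2}/(n+2)!, such that ∫_x^{x+h} f(t)dt = Σ_{k=0}^{n} Ã^{(k)}_{0,1,…,n}[x]·γ_k + ∏_{i=0}^{n}(x − x_i) · Σ_{k=0}^{n} Σ_{j=0}^{k} a_j·(h^{k+1}/(k+1))·f^{(k+n+1−j)}(ξ_{k,j})/(k+n+1−j)! + R. -/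
lemma aux_aitken_eq (X : ℕ → ℝ) (x : ℝ) (g : ℕ → ℝ) (n : ℕ)
    (hXX : ∀ i j, i ≤ n → j ≤ n → i ≠ j → X i ≠ X j) (i : ℕ) :
    ∀ j, i < j → j ≤ n → aitken X x g 0 i j =
      Polynomial.eval x (Lagrange.interpolate (insert j (Finset.range (i + 1))) X g) := by
  have key : ∀ i j, i < j → j ≤ n → 
      Polynomial.eval x (Lagrange.interpolate (insert j (Finset.range (i + 1))) X g) =
      ((X j - x) * Polynomial.eval x (Lagrange.interpolate (Finset.range (i + 1)) X g)
       - (X i - x) * Polynomial.eval x (Lagrange.interpolate (insert j (Finset.range i)) X g))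
        / (X j - X i) := by
    intro i j hij hj
    have hinj : Set.InjOn X (insert j (Finset.range (i + 1)) : Finset ℕ) := by
      intro a ha b hb hab
      by_contra hne
      simp only [Finset.coe_insert, Finset.coe_range, Set.mem_insert_iff, Set.mem_Iio] at ha hb
      exact hXX a b (by omega) (by omega) hne hab
    rw [Lagrange.interpolate_eq_add_interpolate_erase g hinj (i := i) (j := j) (by simp) (by simp)
      hij.ne]
    have h1 : (insert j (Finset.range (i + 1))).erase j = Finset.range (i + 1) := by
      ext a; simp; omega
    have h2 : (insert j (Finset.range (i + 1))).erase i = insert j (Finset.range i) := by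
      ext a; simp; omega
    rw [h1, h2]
    have h3 : X i - X j ≠ 0 := sub_ne_zero.2 (hXX i j (by omega) hj hij.ne)
    have h4 : X j - X i ≠ 0 := sub_ne_zero.2 (hXX j i hj (by omega) hij.ne')
    simp only [Lagrange.basisDivisor, Polynomial.eval_add, Polynomial.eval_mul, Polynomial.eval_C,
      Polynomial.eval_sub, Polynomial.eval_X]
    have h5 : (X i - X j)⁻¹ = - (X j - X i)⁻¹ := by rw [← neg_sub, inv_neg]
    rw [h5]
    field_simp
    ring
  induction i with
  | zero =>
    intro j hij hj
    rw [key 0 j hij hj, aitken]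
    simp [Lagrange.interpolate_singleton]
  | succ i ih =>
    intro j hij hj
    rw [key (i + 1) j hij hj, aitken]
    rw [dif_neg (by omega)]
    rw [show i + 1 - 1 = i from rfl, ih (i + 1) (by omega) (by omega), ih j (by omega) hj]
    rw [← Finset.range_add_one (n := i + 1)]

lemma aux_aitken_bary (X : ℕ → ℝ) (x : ℝ) (g : ℕ → ℝ) (n : ℕ) (hn : 1 ≤ n)
    (hxX : ∀ i ≤ n, X i ≠ x)
    (hXX : ∀ i j, i ≤ n → j ≤ n → i ≠ j → X i ≠ X j) :
    aitken X x g 0 (n - 1) n = (∏ i ∈ Finset.range (n + 1), (x - X i)) *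
      ∑ i ∈ Finset.range (n + 1), Lagrange.nodalWeight (Finset.range (n + 1)) X i
        * (x - X i)⁻¹ * g i := by
  rw [aux_aitken_eq X x g n hXX (n - 1) n (by omega) le_rfl, Nat.sub_add_cancel hn,
    ← Finset.range_add_one, Lagrange.eval_interpolate_not_at_node, Lagrange.eval_nodal]
  intro i hi
  exact (hxX i (by simpa [Nat.lt_succ_iff] using hi)).symm

/-- Rolle step. -/
lemma aux_rolle (p q : ℝ) (J : Set ℝ) (hJ : J.OrdConnected) (hJI : J ⊆ Set.Icc p q)
    (g g' : ℝ → ℝ) (hg : ∀ t ∈ Set.Icc p q, HasDerivWithinAt g (g' t) (Set.Icc p q) t)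
    (N : ℕ) (S : Finset ℝ) (hS : S.card = N + 1) (hSJ : ∀ s ∈ S, s ∈ J ∧ g s = 0) :
    ∃ S' : Finset ℝ, S'.card = N ∧ Disjoint S' S ∧ ∀ s ∈ S', s ∈ J ∧ g' s = 0 := by
  classical
  set e := S.orderEmbOfFin hS with he
  have hgap : ∀ i : Fin N, ∃ z ∈ Set.Ioo (e i.castSucc) (e i.succ), g' z = 0 := by
    intro i
    have hlt : e i.castSucc < e i.succ := e.strictMono (Fin.castSucc_lt_succ)
    have ha := hSJ _ (S.orderEmbOfFin_mem hS i.castSucc)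
    have hb := hSJ _ (S.orderEmbOfFin_mem hS i.succ)
    have hsub : Set.Icc (e i.castSucc) (e i.succ) ⊆ Set.Icc p q := (hJ.out ha.1 hb.1).trans hJI
    apply exists_hasDerivAt_eq_zero hlt
    · exact fun t ht => ((hg t (hsub ht)).continuousWithinAt).mono hsub
    · rw [ha.2, hb.2]
    · intro t ht
      apply (hg t (hsub (Set.Ioo_subset_Icc_self ht))).hasDerivAt
      exact Filter.mem_of_superset (Icc_mem_nhds ht.1 ht.2) hsub
  choose z hz hz0 using hgap
  have hmono : StrictMono z := by
    intro i j hij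
    have h1 : e i.succ ≤ e j.castSucc := e.monotone (by
      rw [Fin.le_def]; simpa using hij)
    exact (hz i).2.trans_le (h1.trans (hz j).1.le)
  refine ⟨Finset.univ.image z, ?_, ?_, ?_⟩
  · rw [Finset.card_image_of_injective _ hmono.injective]; simp
  · rw [Finset.disjoint_left]
    intro s hs hsS
    obtain ⟨i, -, rfl⟩ := Finset.mem_image.1 hs
    have : z i ∈ Set.range e := by rw [he, Finset.range_orderEmbOfFin]; exact hsS
    obtain ⟨j, hj⟩ := this
    have h1 := (hz i).1
    have h2 := (hz i).2
    rw [← hj, e.lt_iff_lt, Fin.lt_def] at h1 h2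
    simp at h1 h2
    omega
  · intro s hs
    obtain ⟨i, -, rfl⟩ := Finset.mem_image.1 hs
    exact ⟨hJ.out (hSJ _ (S.orderEmbOfFin_mem hS i.castSucc)).1
      (hSJ _ (S.orderEmbOfFin_mem hS i.succ)).1 (Set.Ioo_subset_Icc_self (hz i)), hz0 i⟩

lemma aux_rolle_mult (p q : ℝ) (J : Set ℝ) (hJ : J.OrdConnected) (hJI : J ⊆ Set.Icc p q)
    (k n : ℕ) (G : ℕ → ℝ → ℝ)
    (hG : ∀ m < k + n + 1, ∀ t ∈ Set.Icc p q,
      HasDerivWithinAt (G m) (G (m + 1) t) (Set.Icc p q) t)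
    (x : ℝ) (hx : x ∈ J) (hGx : ∀ m ≤ k, G m x = 0)
    (S : Finset ℝ) (hS : S.card = n + 1) (hxS : x ∉ S) (hSJ : ∀ s ∈ S, s ∈ J ∧ G 0 s = 0) :
    ∃ ξ ∈ J, G (k + n + 1) ξ = 0 := by
  classical
  have h1 : ∀ m ≤ k, ∃ S : Finset ℝ, S.card = n + 1 ∧ x ∉ S ∧ ∀ s ∈ S, s ∈ J ∧ G m s = 0 := by
    intro m
    induction m with
    | zero => exact fun _ => ⟨S, hS, hxS, hSJ⟩
    | succ m ih =>
      intro hm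
      obtain ⟨S, hS, hxS, hSJ⟩ := ih (by omega)
      obtain ⟨S', h1, h2, h3⟩ := aux_rolle p q J hJ hJI (G m) (G (m + 1)) (hG m (by omega)) (n + 1)
        (insert x S) (by rw [Finset.card_insert_of_notMem hxS, hS]) (by
          intro s hs
          rcases Finset.mem_insert.1 hs with rfl | hs
          · exact ⟨hx, hGx m (by omega)⟩
          · exact hSJ s hs)
      exact ⟨S', h1, fun hh => Finset.disjoint_left.1 h2 hh (by simp), h3⟩
  have h2 : ∀ l ≤ n + 1, ∃ S : Finset ℝ, S.card = n + 2 - l ∧ ∀ s ∈ S, s ∈ J ∧ G (k + l) s = 0 := by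
    intro l
    induction l with
    | zero =>
      intro _
      obtain ⟨S, hS, hxS, hSJ⟩ := h1 k le_rfl
      refine ⟨insert x S, by rw [Finset.card_insert_of_notMem hxS, hS]; rfl, ?_⟩
      intro s hs
      rcases Finset.mem_insert.1 hs with rfl | hs
      · exact ⟨hx, hGx k (by omega)⟩
      · exact hSJ s hs
    | succ l ih =>
      intro hl
      obtain ⟨S, hS, hSJ⟩ := ih (by omega)
      obtain ⟨S', h1, h2, h3⟩ := aux_rolle p q J hJ hJI (G (k + l)) (G (k + l + 1))
        (hG _ (by omega)) (n + 2 - (l + 1)) S (by omega) hSJ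
      exact ⟨S', h1, h3⟩
  obtain ⟨S, hS, hSJ⟩ := h2 (n + 1) le_rfl
  have : S.Nonempty := by rw [← Finset.card_pos]; omega
  obtain ⟨s, hs⟩ := this
  exact ⟨s, hSJ s hs⟩

lemma aux_hermite (p q : ℝ) (hpq : p < q) (k n : ℕ) (f : ℝ → ℝ)
    (hf : ContDiffOn ℝ (k + n + 1 : ℕ) f (Set.Icc p q))
    (J : Set ℝ) (hJ : J.OrdConnected) (hJI : J ⊆ Set.Icc p q)
    (x : ℝ) (hx : x ∈ J) (X : ℕ → ℝ) (hX : ∀ i ≤ n, X i ∈ J)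
    (hxX : ∀ i ≤ n, X i ≠ x)
    (hXX : ∀ i j, i ≤ n → j ≤ n → i ≠ j → X i ≠ X j) :
    ∃ ξ ∈ J, ∑ i ∈ Finset.range (n + 1), Lagrange.nodalWeight (Finset.range (n + 1)) X i *
      ((f (X i) - ∑ m ∈ Finset.range (k + 1),
        iteratedDerivWithin m f (Set.Icc p q) x / (Nat.factorial m : ℝ) * (X i - x) ^ m)
          / (X i - x) ^ (k + 1))
      = iteratedDerivWithin (k + n + 1) f (Set.Icc p q) ξ / (Nat.factorial (k + n + 1) : ℝ) := by
  classical
  set c : ℕ → ℝ := fun m => iteratedDerivWithin m f (Set.Icc p q) x / (Nat.factorial m : ℝ) with hc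
  set v : ℕ → ℝ := fun i => (f (X i) - ∑ m ∈ Finset.range (k + 1), c m * (X i - x) ^ m)
    / (X i - x) ^ (k + 1) with hv
  set Y : ℕ → ℝ := fun i => X i - x with hY
  have hinjX : Set.InjOn X (Finset.range (n + 1)) := by
    intro a ha b hb hab
    by_contra hne
    simp only [Finset.coe_range, Set.mem_Iio] at ha hb
    exact hXX a b (by omega) (by omega) hne hab
  have hinj : Set.InjOn Y (Finset.range (n + 1)) := by
    intro a ha b hb hab
    exact hinjX ha hb (by simpa [hY] using hab)
  set Q := Lagrange.interpolate (Finset.range (n + 1)) Y v with hQ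
  have hQdeg : Q.degree < (n + 1 : ℕ) := by
    have := Lagrange.degree_interpolate_lt (s := Finset.range (n + 1)) v hinj
    rwa [Finset.card_range] at this
  have hQev : ∀ i ≤ n, Q.eval (Y i) = v i := fun i hi =>
    Lagrange.eval_interpolate_at_node v hinj (by simp; omega)
  have hQn : Q.coeff n = ∑ i ∈ Finset.range (n + 1),
      Lagrange.nodalWeight (Finset.range (n + 1)) X i * v i := by
    have := Lagrange.coeff_eq_sum (s := Finset.range (n + 1)) hinj (P := Q) (by simpa using hQdeg)
    simp only [Finset.card_range, Nat.add_sub_cancel] at this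
    rw [this]
    refine Finset.sum_congr rfl fun i hi => ?_
    rw [hQev i (by simpa [Nat.lt_succ_iff] using hi), Lagrange.nodalWeight, Finset.prod_inv_distrib]
    simp only [hY, sub_sub_sub_cancel_right]
    rw [div_eq_mul_inv, mul_comm]
  set T : Polynomial ℝ := ∑ m ∈ Finset.range (k + 1), Polynomial.C (c m) * Polynomial.X ^ m
    + Q * Polynomial.X ^ (k + 1) with hT
  have hTlow : ∀ m ≤ k, T.coeff m = c m := by
    intro m hm
    rw [hT, Polynomial.coeff_add, Polynomial.coeff_mul_X_pow', if_neg (by omega), add_zero,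
      Polynomial.finsetSum_coeff]
    simp only [Polynomial.coeff_C_mul_X_pow]
    rw [Finset.sum_ite_eq, if_pos (by simp; omega)]
  have hThigh : ∀ l, T.coeff (k + 1 + l) = Q.coeff l := by
    intro l
    rw [hT, Polynomial.coeff_add, Polynomial.coeff_mul_X_pow', if_pos (by omega),
      Polynomial.finsetSum_coeff]
    simp only [Polynomial.coeff_C_mul_X_pow]
    rw [Finset.sum_ite_eq, if_neg (by simp; omega), zero_add, Nat.add_sub_cancel_left]
  have hTdeg : T.natDegree ≤ k + n + 1 := by
    rw [Polynomial.natDegree_le_iff_coeff_eq_zero]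
    intro N hN
    obtain ⟨l, rfl⟩ : ∃ l, N = k + 1 + l := ⟨N - (k + 1), by omega⟩
    rw [hThigh]
    apply Polynomial.coeff_eq_zero_of_degree_lt
    refine hQdeg.trans_le ?_
    exact_mod_cast (by omega : n + 1 ≤ l)
  have hTev : ∀ i ≤ n, T.eval (X i - x) = f (X i) := by
    intro i hi
    have h0 : X i - x ≠ 0 := sub_ne_zero.2 (hxX i hi)
    have h1 : Q.eval (X i - x) = v i := hQev i hi
    rw [hT]
    simp only [Polynomial.eval_add, Polynomial.eval_mul, Polynomial.eval_pow, Polynomial.eval_X,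
      Polynomial.eval_finsetSum, Polynomial.eval_C, h1]
    simp only [hv]
    rw [div_mul_cancel₀ _ (pow_ne_zero _ h0)]
    ring
  set H := Polynomial.taylor (-x) T with hH
  have hder : ∀ m r, (Polynomial.derivative^[m] H).eval r =
      (Nat.factorial m : ℝ) * (Polynomial.taylor (r - x) T).coeff m := by
    intro m r
    rw [← Polynomial.factorial_smul_hasseDeriv, LinearMap.smul_apply, Polynomial.eval_smul,
      ← Polynomial.taylor_coeff, hH, Polynomial.taylor_taylor, ← sub_eq_add_neg, nsmul_eq_mul]
  obtain ⟨ξ, hξ, hξ0⟩ := aux_rolle_mult p q J hJ hJI k n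
    (fun m t => iteratedDerivWithin m f (Set.Icc p q) t - (Polynomial.derivative^[m] H).eval t)
    (by
      intro m hm t ht
      refine HasDerivWithinAt.sub ?_ ?_
      · rw [iteratedDerivWithin_succ]
        apply DifferentiableWithinAt.hasDerivWithinAt
        exact hf.differentiableOn_iteratedDerivWithin (by exact_mod_cast hm)
          (uniqueDiffOn_Icc hpq) t ht
      · rw [Function.iterate_succ_apply']
        exact (Polynomial.hasDerivAt _ t).hasDerivWithinAt)
    x hx
    (by
      intro m hm
      rw [hder, sub_self, Polynomial.taylor_zero, hTlow m hm, hc]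
      have : (Nat.factorial m : ℝ) ≠ 0 := by positivity
      field_simp
      ring)
    ((Finset.range (n + 1)).image X)
    (by rw [Finset.card_image_of_injOn hinjX]; simp)
    (by
      intro hmem
      obtain ⟨i, hi, hix⟩ := Finset.mem_image.1 hmem
      exact hxX i (by simpa [Nat.lt_succ_iff] using hi) hix)
    (by
      intro s hs
      obtain ⟨i, hi, rfl⟩ := Finset.mem_image.1 hs
      have hi : i ≤ n := by simpa [Nat.lt_succ_iff] using hi
      refine ⟨hX i hi, ?_⟩
      simp only [iteratedDerivWithin_zero, Function.iterate_zero, id]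
      rw [hH, Polynomial.taylor_eval, ← sub_eq_add_neg, hTev i hi, sub_self])
  refine ⟨ξ, hξ, ?_⟩
  rw [← hQn, ← hThigh n]
  have hco : (Polynomial.taylor (ξ - x) T).coeff (k + n + 1) = T.coeff (k + n + 1) := by
    rcases hTdeg.lt_or_eq with hlt | heq
    · rw [Polynomial.coeff_eq_zero_of_natDegree_lt hlt, Polynomial.coeff_eq_zero_of_natDegree_lt]
      rwa [Polynomial.natDegree_taylor]
    · rw [← heq, Polynomial.coeff_taylor_natDegree, Polynomial.leadingCoeff]
  rw [hder, hco, sub_eq_zero] at hξ0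
  rw [hξ0, show k + 1 + n = k + n + 1 by ring]
  have : (Nat.factorial (k + n + 1) : ℝ) ≠ 0 := by positivity
  field_simp

lemma aux_taylor_bound (p q : ℝ) (hpq : p < q) (n : ℕ) (f : ℝ → ℝ)
    (hf : ContDiffOn ℝ (n + 1 : ℕ) f (Set.Icc p q)) (x h : ℝ) (hx : x ∈ Set.Icc p q)
    (hxh : x + h ∈ Set.Icc p q) (t : ℝ) (ht : t ∈ Set.uIcc x (x + h)) :
    |f t - ∑ m ∈ Finset.range (n + 1),
        iteratedDerivWithin m f (Set.Icc p q) x / (Nat.factorial m : ℝ) * (t - x) ^ m| ≤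
      sSup ((fun s => |iteratedDerivWithin (n + 1) f (Set.Icc p q) s|) '' Set.uIcc x (x + h))
        / (Nat.factorial (n + 1) : ℝ) * |t - x| ^ (n + 1) := by
  have hsub : Set.uIcc x (x + h) ⊆ Set.Icc p q := Set.OrdConnected.uIcc_subset Set.ordConnected_Icc hx hxh
  rcases eq_or_ne t x with rfl | htx
  · rw [Finset.sum_range_succ']
    simp
  obtain ⟨ξ, hξ, h1⟩ := aux_hermite p q hpq n 0 f hf (Set.uIcc x (x + h)) Set.ordConnected_uIcc
    hsub x Set.left_mem_uIcc (fun _ => t) (fun _ _ => ht) (fun _ _ => htx)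
    (fun i j hi hj hij => by omega)
  simp only [zero_add, Finset.range_one, Finset.sum_singleton, Lagrange.nodalWeight, add_zero] at h1
  rw [show ({0} : Finset ℕ).erase 0 = ∅ by decide, Finset.prod_empty, one_mul] at h1
  have h0 : t - x ≠ 0 := sub_ne_zero.2 htx
  rw [div_eq_iff (pow_ne_zero _ h0)] at h1
  rw [h1, abs_mul, abs_pow, abs_div, Nat.abs_cast]
  gcongr
  refine le_csSup ?_ ⟨ξ, hξ, rfl⟩
  apply (isCompact_uIcc).bddAbove_image
  exact ((hf.continuousOn_iteratedDerivWithin (by exact_mod_cast le_rfl) (uniqueDiffOn_Icc hpq)).abs).mono hsub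

lemma aux_int_pow (x h : ℝ) (N : ℕ) :
    |∫ t in x..(x + h), |t - x| ^ N| = |h| ^ (N + 1) / (N + 1 : ℝ) := by
  rw [intervalIntegral.integral_comp_sub_right (fun t => |t| ^ N) x]
  simp only [sub_self, add_sub_cancel_left]
  rcases le_total 0 h with hh | hh
  · rw [intervalIntegral.integral_congr (g := fun t => t ^ N)]
    · rw [integral_pow]
      simp [abs_div, abs_pow]
      rw [abs_of_nonneg (by positivity : (0 : ℝ) ≤ N + 1)]
    · intro t ht
      rw [Set.uIcc_of_le hh] at ht
      simp [abs_of_nonneg ht.1]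
  · rw [intervalIntegral.integral_congr (g := fun t => (-1) ^ N * t ^ N)]
    · rw [intervalIntegral.integral_const_mul, integral_pow]
      simp [abs_div, abs_pow]
      rw [abs_of_nonneg (by positivity : (0 : ℝ) ≤ N + 1)]
    · intro t ht
      rw [Set.uIcc_of_ge hh] at ht
      simp only
      rw [abs_of_nonpos ht.2, neg_pow]

lemma aux_remainder (p q : ℝ) (hpq : p < q) (n : ℕ) (f : ℝ → ℝ)
    (hf : ContDiffOn ℝ (n + 1 : ℕ) f (Set.Icc p q)) (x h : ℝ) (hx : x ∈ Set.Icc p q)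
    (hxh : x + h ∈ Set.Icc p q) :
    |(∫ s in x..(x + h), f s) - ∑ k ∈ Finset.range (n + 1),
        iteratedDerivWithin k f (Set.Icc p q) x / (Nat.factorial k : ℝ) * (h ^ (k + 1) / (k + 1 : ℝ))|
      ≤ sSup ((fun s => |iteratedDerivWithin (n + 1) f (Set.Icc p q) s|) '' Set.uIcc x (x + h))
                * |h| ^ (n + 2) / (Nat.factorial (n + 2) : ℝ) := by
  have hsub : Set.uIcc x (x + h) ⊆ Set.Icc p q := Set.OrdConnected.uIcc_subset Set.ordConnected_Icc hx hxh
  set M := sSup ((fun s => |iteratedDerivWithin (n + 1) f (Set.Icc p q) s|) '' Set.uIcc x (x + h))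
    with hM
  have hM0 : 0 ≤ M := by
    apply Real.sSup_nonneg
    rintro _ ⟨s, -, rfl⟩
    exact abs_nonneg _
  have hT : ∑ k ∈ Finset.range (n + 1),
        iteratedDerivWithin k f (Set.Icc p q) x / (Nat.factorial k : ℝ) * (h ^ (k + 1) / (k + 1 : ℝ))
      = ∫ s in x..(x + h), ∑ m ∈ Finset.range (n + 1),
        iteratedDerivWithin m f (Set.Icc p q) x / (Nat.factorial m : ℝ) * (s - x) ^ m := by
    rw [intervalIntegral.integral_finsetSum]
    · refine Finset.sum_congr rfl fun m _ => ?_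
      rw [intervalIntegral.integral_const_mul,
        intervalIntegral.integral_comp_sub_right (fun t => t ^ m) x, integral_pow]
      simp
    · intro m _
      apply Continuous.intervalIntegrable
      fun_prop
  rw [hT, ← intervalIntegral.integral_sub]
  · have := intervalIntegral.norm_integral_le_abs_of_norm_le (μ := MeasureTheory.volume)
      (a := x) (b := x + h)
      (f := fun t => f t - ∑ m ∈ Finset.range (n + 1),
        iteratedDerivWithin m f (Set.Icc p q) x / (Nat.factorial m : ℝ) * (t - x) ^ m)
      (g := fun t => M / (Nat.factorial (n + 1) : ℝ) * |t - x| ^ (n + 1))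
      (by
        refine (MeasureTheory.ae_restrict_iff' measurableSet_uIoc).2 (Filter.Eventually.of_forall ?_)
        intro t ht
        exact aux_taylor_bound p q hpq n f hf x h hx hxh t (Set.uIoc_subset_uIcc ht))
      (by
        apply Continuous.intervalIntegrable
        fun_prop)
    rw [Real.norm_eq_abs] at this
    refine this.trans (le_of_eq ?_)
    rw [intervalIntegral.integral_const_mul, abs_mul, aux_int_pow, abs_of_nonneg (by positivity),
      Nat.factorial_succ (n + 1)]
    push_cast
    have : (Nat.factorial (n + 1) : ℝ) ≠ 0 := by positivity
    field_simp
  · exact (hf.continuousOn.mono hsub).intervalIntegrable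
  · apply Continuous.intervalIntegrable
    fun_prop

theorem stmt_9 (p q : ℝ) (hpq : p < q) (n : ℕ) (hn : 1 ≤ n)
    (f : ℝ → ℝ) (hf : ContDiffOn ℝ (2 * n + 1 : ℕ) f (Set.Icc p q))
    (x h : ℝ) (hh : h ≠ 0) (hx : x ∈ Set.Icc p q) (hxh : x + h ∈ Set.Icc p q)
    (X : ℕ → ℝ) (hX : ∀ i ≤ n, X i ∈ Set.Icc p q)
    (hxX : ∀ i ≤ n, X i ≠ x)
    (hXX : ∀ i j, i ≤ n → j ≤ n → i ≠ j → X i ≠ X j)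
    (a : ℕ → ℝ) (ha0 : a 0 = 1)
    (hak : ∀ m, 1 ≤ m → m ≤ n →
      a m = -(∑ j ∈ Finset.range m, a j * aitken X x (fun i => 1 / (X i - x) ^ (m - j)) 0 (n - 1) n))
    (γ : ℕ → ℝ)
    (hγ : ∀ k ≤ n, γ k = ∑ m ∈ Finset.range (n - k + 1), a m * h ^ (k + m + 1) / (k + m + 1 : ℝ)) :
    ∃ ξ : ℕ → ℕ → ℝ,
      (∀ k ≤ n, ∀ j ≤ k, ξ k j ∈ convexHull ℝ (insert x (X '' Set.Iic n))) ∧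
      ∃ R : ℝ,
        |R| ≤ sSup ((fun s => |iteratedDerivWithin (n + 1) f (Set.Icc p q) s|) '' Set.uIcc x (x + h))
                * |h| ^ (n + 2) / (Nat.factorial (n + 2) : ℝ) ∧
        (∫ s in x..(x + h), f s)
          = (∑ k ∈ Finset.range (n + 1), aitken X x (fun i => f (X i) / (X i - x) ^ k) 0 (n - 1) n * γ k)
            + (∏ i ∈ Finset.range (n + 1), (x - X i))
              * (∑ k ∈ Finset.range (n + 1), ∑ j ∈ Finset.range (k + 1),
                  a j * (h ^ (k + 1) / (k + 1 : ℝ))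
                    * iteratedDerivWithin (k + n + 1 - j) f (Set.Icc p q) (ξ k j)
                      / (Nat.factorial (k + n + 1 - j) : ℝ))
            + R := by
  classical
  have hfk : ∀ k ≤ n, ContDiffOn ℝ (k + n + 1 : ℕ) f (Set.Icc p q) := fun k hk =>
    hf.of_le (by exact_mod_cast (by omega : k + n + 1 ≤ 2 * n + 1))
  set J : Set ℝ := convexHull ℝ (insert x (X '' Set.Iic n)) with hJdef
  have hJI : J ⊆ Set.Icc p q := by
    apply convexHull_min _ (convex_Icc p q)
    rintro y (rfl | ⟨i, hi, rfl⟩)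
    · exact hx
    · exact hX i hi
  have hJ : J.OrdConnected := (convex_convexHull ℝ _).ordConnected
  have hxJ : x ∈ J := subset_convexHull ℝ _ (Set.mem_insert _ _)
  have hXJ : ∀ i ≤ n, X i ∈ J := fun i hi =>
    subset_convexHull ℝ _ (Set.mem_insert_of_mem _ ⟨i, hi, rfl⟩)
  set P := ∏ i ∈ Finset.range (n + 1), (x - X i) with hP
  set c : ℕ → ℝ := fun m => iteratedDerivWithin m f (Set.Icc p q) x / (Nat.factorial m : ℝ) with hc
  set A : ℕ → ℝ := fun r => aitken X x (fun i => 1 / (X i - x) ^ r) 0 (n - 1) n with hA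
  set At : ℕ → ℝ := fun k => aitken X x (fun i => f (X i) / (X i - x) ^ k) 0 (n - 1) n with hAt
  have hbary := fun g => aux_aitken_bary X x g n hn hxX hXX
  have hA0 : A 0 = 1 := by
    simp only [hA, pow_zero, div_one]
    rw [aux_aitken_eq X x _ n hXX (n - 1) n (by omega) le_rfl, Nat.sub_add_cancel hn,
      ← Finset.range_add_one]
    have hinjX : Set.InjOn X (Finset.range (n + 1)) := by
      intro a ha b hb hab
      by_contra hne
      simp only [Finset.coe_range, Set.mem_Iio] at ha hb
      exact hXX a b (by omega) (by omega) hne hab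
    have := Lagrange.interpolate_one hinjX (by simp)
    rw [show (fun _ : ℕ => (1 : ℝ)) = 1 from rfl, this, Polynomial.eval_one]
  have hex : ∀ k, ∃ ξ, k ≤ n → ξ ∈ J ∧
      At k + P * (iteratedDerivWithin (k + n + 1) f (Set.Icc p q) ξ
        / (Nat.factorial (k + n + 1) : ℝ)) = ∑ m ∈ Finset.range (k + 1), c m * A (k - m) := by
    intro k
    by_cases hk : k ≤ n
    swap
    · exact ⟨0, fun h => absurd h hk⟩
    obtain ⟨ξ, hξ, h1⟩ := aux_hermite p q hpq k n f (hfk k hk) J hJ hJI x hxJ X hXJ hxX hXX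
    refine ⟨ξ, fun _ => ⟨hξ, ?_⟩⟩
    have h1 : ∑ i ∈ Finset.range (n + 1), Lagrange.nodalWeight (Finset.range (n + 1)) X i *
      ((f (X i) - ∑ m ∈ Finset.range (k + 1), c m * (X i - x) ^ m) / (X i - x) ^ (k + 1))
      = iteratedDerivWithin (k + n + 1) f (Set.Icc p q) ξ / (Nat.factorial (k + n + 1) : ℝ) := h1
    rw [← h1]
    simp only [hAt, hA, hbary]
    rw [← mul_add, ← Finset.sum_add_distrib]
    have : ∀ m, c m * (P * ∑ i ∈ Finset.range (n + 1),
        Lagrange.nodalWeight (Finset.range (n + 1)) X i * (x - X i)⁻¹ * (1 / (X i - x) ^ (k - m)))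
        = P * ∑ i ∈ Finset.range (n + 1), Lagrange.nodalWeight (Finset.range (n + 1)) X i
          * (x - X i)⁻¹ * (c m * (1 / (X i - x) ^ (k - m))) := by
      intro m
      rw [mul_left_comm, Finset.mul_sum]
      congr 1
      exact Finset.sum_congr rfl fun i _ => by ring
    rw [Finset.sum_congr rfl fun m _ => this m, ← Finset.mul_sum, Finset.sum_comm]
    congr 1
    refine Finset.sum_congr rfl fun i hi => ?_
    have h0 : X i - x ≠ 0 := sub_ne_zero.2 (hxX i (by simpa [Nat.lt_succ_iff] using hi))
    have h0' : (x - X i)⁻¹ = - (X i - x)⁻¹ := by rw [← neg_sub, inv_neg]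
    rw [← Finset.mul_sum, h0']
    have h2 : ∑ m ∈ Finset.range (k + 1), c m * (1 / (X i - x) ^ (k - m)) =
        (∑ m ∈ Finset.range (k + 1), c m * (X i - x) ^ m) / (X i - x) ^ k := by
      rw [Finset.sum_div]
      refine Finset.sum_congr rfl fun m hm => ?_
      obtain ⟨l, rfl⟩ : ∃ l, k = m + l := ⟨k - m, by simp at hm; omega⟩
      rw [Nat.add_sub_cancel_left, pow_add]
      field_simp
    rw [h2, pow_succ]
    field_simp
    ring
  choose ξ hξ using hex
  set D : ℕ → ℝ := fun k => iteratedDerivWithin (k + n + 1) f (Set.Icc p q) (ξ k)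
        / (Nat.factorial (k + n + 1) : ℝ) with hD
  have hinv : ∀ m ≤ n, ∑ j ∈ Finset.range (m + 1), a j * A (m - j) = if m = 0 then 1 else 0 := by
    intro m hm
    rcases Nat.eq_zero_or_pos m with rfl | hpos
    · simp [ha0, hA0]
    · rw [if_neg hpos.ne', Finset.sum_range_succ, Nat.sub_self, hA0, hak m hpos hm]
      simp only [hA]
      ring
  have hck : ∀ k ≤ n, c k = ∑ j ∈ Finset.range (k + 1), a j * (At (k - j) + P * D (k - j)) := by
    intro k hk
    have e1 : ∀ j ∈ Finset.range (k + 1), a j * (At (k - j) + P * D (k - j)) =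
        PowerSeries.coeff j (PowerSeries.mk a) *
          PowerSeries.coeff (k - j) (PowerSeries.mk c * PowerSeries.mk A) := by
      intro j hj
      rw [(hξ (k - j) (by omega)).2, PowerSeries.coeff_mul, PowerSeries.coeff_mk,
        Finset.Nat.sum_antidiagonal_eq_sum_range_succ_mk]
      simp
    rw [Finset.sum_congr rfl e1, ← Finset.Nat.sum_antidiagonal_eq_sum_range_succ
      (fun i j => PowerSeries.coeff i (PowerSeries.mk a) *
          PowerSeries.coeff j (PowerSeries.mk c * PowerSeries.mk A)), ← PowerSeries.coeff_mul,
      mul_left_comm, PowerSeries.coeff_mul, Finset.Nat.sum_antidiagonal_eq_sum_range_succ_mk]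
    have e2 : ∀ m ∈ Finset.range (k + 1), PowerSeries.coeff m (PowerSeries.mk c) *
        PowerSeries.coeff (k - m) (PowerSeries.mk a * PowerSeries.mk A) =
        if m = k then c k else 0 := by
      intro m hm
      have hm : m ≤ k := by simpa [Nat.lt_succ_iff] using hm
      rw [PowerSeries.coeff_mul, Finset.Nat.sum_antidiagonal_eq_sum_range_succ_mk]
      simp only [PowerSeries.coeff_mk]
      rw [hinv (k - m) (by omega)]
      by_cases h : m = k
      · subst h; simp
      · rw [if_neg (by omega), if_neg h, mul_zero]
    rw [Finset.sum_congr rfl e2, Finset.sum_ite_eq', if_pos (by simp)]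
  refine ⟨fun k j => ξ (k - j), fun k hk j hj => (hξ (k - j) (by omega)).1,
    (∫ s in x..(x + h), f s) - ∑ k ∈ Finset.range (n + 1), c k * (h ^ (k + 1) / (k + 1 : ℝ)),
    aux_remainder p q hpq n f (hf.of_le (by exact_mod_cast (by omega : n + 1 ≤ 2 * n + 1)))
      x h hx hxh, ?_⟩
  have hmain : ∑ k ∈ Finset.range (n + 1), c k * (h ^ (k + 1) / (k + 1 : ℝ)) =
      (∑ k ∈ Finset.range (n + 1), At k * γ k) + P * (∑ k ∈ Finset.range (n + 1),
        ∑ j ∈ Finset.range (k + 1), a j * (h ^ (k + 1) / (k + 1 : ℝ))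
                    * iteratedDerivWithin (k + n + 1 - j) f (Set.Icc p q) (ξ (k - j))
                      / (Nat.factorial (k + n + 1 - j) : ℝ)) := by
    have e1 : ∑ k ∈ Finset.range (n + 1), At k * γ k = ∑ k ∈ Finset.range (n + 1),
        ∑ j ∈ Finset.range (k + 1), a j * At (k - j) * (h ^ (k + 1) / (k + 1 : ℝ)) := by
      have e2 := Finset.sum_range_diag_flip (n + 1)
        (fun k l => At k * (a l * h ^ (k + l + 1) / (k + l + 1 : ℝ)))
      calc _ = _ := ?_
        _ = _ := e2.symm
        _ = _ := ?_
      · refine Finset.sum_congr rfl fun k hk => ?_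
        have hk : k ≤ n := by simpa [Nat.lt_succ_iff] using hk
        rw [hγ k hk, Finset.mul_sum, show n + 1 - k = n - k + 1 by omega]
      · refine Finset.sum_congr rfl fun k hk => ?_
        rw [← Finset.sum_range_reflect]
        refine Finset.sum_congr rfl fun j hj => ?_
        have hj : j ≤ k := by simpa [Nat.lt_succ_iff] using hj
        have h1 : k + 1 - 1 - j = k - j := by omega
        have h2 : k - (k - j) = j := by omega
        have h3 : k - j + j = k := by omega
        rw [h1, h2, h3]
        have h4 : ((k - j : ℕ) : ℝ) + (j : ℝ) = k := by exact_mod_cast h3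
        rw [h4]
        ring
    rw [e1, Finset.mul_sum, ← Finset.sum_add_distrib]
    refine Finset.sum_congr rfl fun k hk => ?_
    have hk : k ≤ n := by simpa [Nat.lt_succ_iff] using hk
    rw [hck k hk, Finset.mul_sum, ← Finset.sum_add_distrib, Finset.sum_mul]
    refine Finset.sum_congr rfl fun j hj => ?_
    have hj : j ≤ k := by simpa [Nat.lt_succ_iff] using hj
    rw [show k + n + 1 - j = k - j + n + 1 by omega]
    simp only [hD]
    ring
  rw [← hmain]
  ring
end

section
/- Let P be a real polynomial with deg P ≤ n, let 1 ≤ r ≤ n, and let x, x_0, …, x_n be pairwise distinct reals. Then the divided difference P[x, x_0, …, x_{r−1}] equals the Neville iterate D_{r,r+1,…,n}[x] built from the initial values D_j[x] = P[x_j, x_0, …, x_{r−1}], j = r, …, n; that is, the Neville iteration reconstructs the divided-difference polynomial exactly, with zero error. -/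
open Polynomial in
lemma combine_poly (a b : ℝ) (d : ℕ) (p0 p1 : ℝ[X]) (h0 : p0.natDegree ≤ d)
    (h1 : p1.natDegree ≤ d) : ∃ p : ℝ[X], p.natDegree ≤ d + 1 ∧
      p.coeff (d + 1) = (p1.coeff d - p0.coeff d) / (b - a) ∧
      ∀ t, p.eval t = ((b - t) * p0.eval t - (a - t) * p1.eval t) / (b - a) := by
  refine ⟨C (b - a)⁻¹ * ((C b * p0 - X * p0) - (C a * p1 - X * p1)), ?_, ?_, ?_⟩
  · refine (natDegree_C_mul_le _ _).trans ?_
    have e0 : (C b * p0).natDegree ≤ d + 1 := (natDegree_C_mul_le _ _).trans (by omega)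
    have e1 : (C a * p1).natDegree ≤ d + 1 := (natDegree_C_mul_le _ _).trans (by omega)
    have e2 : (X * p0).natDegree ≤ d + 1 :=
      natDegree_mul_le.trans (by rw [natDegree_X]; omega)
    have e3 : (X * p1).natDegree ≤ d + 1 :=
      natDegree_mul_le.trans (by rw [natDegree_X]; omega)
    exact natDegree_sub_le_of_le (natDegree_sub_le_of_le e0 e2) (natDegree_sub_le_of_le e1 e3)
      |>.trans (by simp)
  · have c0 : p0.coeff (d + 1) = 0 := coeff_eq_zero_of_natDegree_lt (by omega)
    have c1 : p1.coeff (d + 1) = 0 := coeff_eq_zero_of_natDegree_lt (by omega)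
    simp only [coeff_C_mul, coeff_sub, coeff_X_mul, c0, c1]
    ring
  · intro t
    simp only [eval_mul, eval_C, eval_sub, eval_X]
    ring

open Polynomial in
lemma poly_unique (y : ℕ → ℝ) (i d : ℕ) (p q : ℝ[X]) (hp : p.natDegree ≤ d)
    (hq : q.natDegree ≤ d)
    (hy : ∀ k l, i ≤ k → k ≤ i + d → i ≤ l → l ≤ i + d → k ≠ l → y k ≠ y l)
    (h : ∀ k, i ≤ k → k ≤ i + d → p.eval (y k) = q.eval (y k)) : p = q := by
  have hc : (Finset.Icc i (i + d)).card = d + 1 := by simp; omega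
  refine eq_of_degrees_lt_of_eval_index_eq (Finset.Icc i (i + d)) (v := y) ?_ ?_ ?_ ?_
  · intro k hk l hl hkl
    simp only [Finset.coe_Icc, Set.mem_Icc] at hk hl
    by_contra hne
    exact hy k l hk.1 hk.2 hl.1 hl.2 hne hkl
  · rw [hc]
    exact (degree_le_of_natDegree_le hp).trans_lt (by exact_mod_cast Nat.lt_succ_self d)
  · rw [hc]
    exact (degree_le_of_natDegree_le hq).trans_lt (by exact_mod_cast Nat.lt_succ_self d)
  · intro k hk
    rw [Finset.mem_Icc] at hk
    exact h k hk.1 hk.2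

open Polynomial in
lemma divDiff_exists (f : ℝ → ℝ) (y : ℕ → ℝ) (d : ℕ) : ∀ i : ℕ,
    (∀ k l, i ≤ k → k ≤ i + d → i ≤ l → l ≤ i + d → k ≠ l → y k ≠ y l) →
    ∃ p : ℝ[X], p.natDegree ≤ d ∧ p.coeff d = divDiff f y i (i + d) ∧
      ∀ k, i ≤ k → k ≤ i + d → p.eval (y k) = f (y k) := by
  induction d with
  | zero =>
    intro i _
    refine ⟨C (f (y i)), by simp, ?_, ?_⟩
    · rw [divDiff]; simp
    · intro k h1 h2
      have : k = i := by omega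
      subst this; simp
  | succ d ih =>
    intro i hy
    obtain ⟨p0, a0, b0, c0⟩ := ih i (fun k l _ _ _ _ h => hy k l (by omega) (by omega) (by omega) (by omega) h)
    obtain ⟨p1, a1, b1, c1⟩ := ih (i+1) (fun k l _ _ _ _ h => hy k l (by omega) (by omega) (by omega) (by omega) h)
    obtain ⟨p, a, b, c⟩ := combine_poly (y i) (y (i + (d + 1))) d p0 p1 a0 a1
    have hne : y (i + (d+1)) - y i ≠ 0 := sub_ne_zero.2
      (hy _ _ (by omega) (by omega) (by omega) (by omega) (by omega))
    refine ⟨p, a, ?_, ?_⟩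
    · rw [b, b0, b1]
      conv_rhs => rw [divDiff]
      rw [dif_neg (by omega)]
      have e1 : i + 1 + d = i + (d + 1) := by omega
      have e2 : i + (d + 1) - 1 = i + d := by omega
      rw [e1, e2]
    · intro k h1 h2
      rw [c, div_eq_iff hne]
      rcases eq_or_ne k i with rfl | hk
      · rw [c0 k (by omega) (by omega)]; ring
      · rcases eq_or_ne k (i + (d + 1)) with rfl | hk'
        · rw [c1 _ (by omega) (by omega)]; ring
        · rw [c0 k (by omega) (by omega), c1 k (by omega) (by omega)]; ring

open Polynomial in
lemma neville_exists (y : ℕ → ℝ) (x : ℝ) (g : ℕ → ℝ) (d : ℕ) : ∀ i : ℕ,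
    (∀ k l, i ≤ k → k ≤ i + d → i ≤ l → l ≤ i + d → k ≠ l → y k ≠ y l) →
    ∃ p : ℝ[X], p.natDegree ≤ d ∧ p.eval x = neville y x g d i ∧
      ∀ k, i ≤ k → k ≤ i + d → p.eval (y k) = g k := by
  induction d with
  | zero =>
    intro i _
    refine ⟨C (g i), by simp, ?_, ?_⟩
    · rw [neville]; simp
    · intro k h1 h2
      have : k = i := by omega
      subst this; simp
  | succ d ih =>
    intro i hy
    obtain ⟨p0, a0, b0, c0⟩ := ih i (fun k l _ _ _ _ h => hy k l (by omega) (by omega) (by omega) (by omega) h)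
    obtain ⟨p1, a1, b1, c1⟩ := ih (i+1) (fun k l _ _ _ _ h => hy k l (by omega) (by omega) (by omega) (by omega) h)
    obtain ⟨p, a, b, c⟩ := combine_poly (y i) (y (i + (d + 1))) d p0 p1 a0 a1
    have hne : y (i + (d+1)) - y i ≠ 0 := sub_ne_zero.2
      (hy _ _ (by omega) (by omega) (by omega) (by omega) (by omega))
    refine ⟨p, a, ?_, ?_⟩
    · rw [c, b0, b1, neville]
      have e1 : d + 1 + i = i + (d + 1) := by omega
      rw [e1]
    · intro k h1 h2
      rw [c, div_eq_iff hne]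
      rcases eq_or_ne k i with rfl | hk
      · rw [c0 k (by omega) (by omega)]; ring
      · rcases eq_or_ne k (i + (d + 1)) with rfl | hk'
        · rw [c1 _ (by omega) (by omega)]; ring
        · rw [c0 k (by omega) (by omega), c1 k (by omega) (by omega)]; ring

open Polynomial in
lemma divDiff_eq_quot (P : ℝ[X]) (Y : ℕ → ℝ) (r : ℕ) (t : ℝ) (ht : ∀ i < r, Y i ≠ t)
    (hY : ∀ i j, i < r → j < r → i ≠ j → Y i ≠ Y j) :
    divDiff (fun y => P.eval y) (fun i => if i = 0 then t else Y (i - 1)) 0 r =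
      (P /ₘ (∏ i ∈ Finset.range r, (X - C (Y i)))).eval t := by
  set N : ℝ[X] := ∏ i ∈ Finset.range r, (X - C (Y i)) with hN
  have hmon : N.Monic := monic_prod_of_monic _ _ (fun i _ => monic_X_sub_C _)
  have hdeg : N.natDegree = r := by
    rw [hN, natDegree_prod_of_monic _ _ (fun i _ => monic_X_sub_C _)]; simp
  set y : ℕ → ℝ := fun i => if i = 0 then t else Y (i - 1) with hy
  have hinj : ∀ k l, 0 ≤ k → k ≤ 0 + r → 0 ≤ l → l ≤ 0 + r → k ≠ l → y k ≠ y l := by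
    intro k l _ hk _ hl hkl
    simp only [hy]
    split_ifs with h1 h2 h2
    · omega
    · exact (ht _ (by omega)).symm
    · exact ht _ (by omega)
    · exact hY _ _ (by omega) (by omega) (by omega)
  obtain ⟨p, a, b, c⟩ := divDiff_exists (fun y => P.eval y) y r 0 hinj
  have hrem : (P %ₘ N).degree < (r : ℕ) := by
    have := degree_modByMonic_lt P hmon
    rwa [degree_eq_natDegree hmon.ne_zero, hdeg] at this
  have hdecomp : ∀ s, P.eval s = (P %ₘ N).eval s + N.eval s * (P /ₘ N).eval s := by
    intro s
    conv_lhs => rw [← modByMonic_add_div P N]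
    simp
  have key : p = P %ₘ N + C ((P /ₘ N).eval t) * N := by
    refine poly_unique y 0 r _ _ a ?_ hinj ?_
    · refine natDegree_add_le_of_degree_le ?_ ((natDegree_C_mul_le _ _).trans hdeg.le)
      exact natDegree_le_of_degree_le hrem.le
    · intro k hk hk'
      rw [c k hk hk', hdecomp]
      rcases eq_or_ne k 0 with rfl | h0
      · simp [hy]; ring
      · have hz : N.eval (y k) = 0 := by
          rw [hN, eval_prod]
          refine Finset.prod_eq_zero (i := k - 1) (Finset.mem_range.2 (by omega)) ?_
          simp [hy, h0]
        simp [hz]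
  rw [zero_add] at b
  rw [← b, key, coeff_add, coeff_C_mul, coeff_eq_zero_of_degree_lt hrem]
  have : N.coeff r = 1 := by
    have := hmon.coeff_natDegree
    rwa [hdeg] at this
  rw [this]; ring

theorem stmt_12 (n r : ℕ) (hr : 1 ≤ r) (hrn : r ≤ n)
    (P : Polynomial ℝ) (hP : P.degree ≤ (n : WithBot ℕ)) (x : ℝ) (X : ℕ → ℝ)
    (hxX : ∀ i ≤ n, X i ≠ x)
    (hXX : ∀ i j, i ≤ n → j ≤ n → i ≠ j → X i ≠ X j) :
    divDiff (fun y => P.eval y) (fun i => if i = 0 then x else X (i - 1)) 0 r = neville X x (fun j => divDiff (fun y => P.eval y) (fun i => if i = 0 then X j else X (i - 1)) 0 r) (n - r) r := by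
  have hY : ∀ i j, i < r → j < r → i ≠ j → X i ≠ X j :=
    fun i j hi hj h => hXX i j (by omega) (by omega) h
  have hinj : ∀ k l, r ≤ k → k ≤ r + (n - r) → r ≤ l → l ≤ r + (n - r) → k ≠ l → X k ≠ X l :=
    fun k l _ _ _ _ h => hXX k l (by omega) (by omega) h
  rw [divDiff_eq_quot P X r x (fun i hi => hxX i (by omega)) hY]
  obtain ⟨p, a, b, c⟩ := neville_exists X x (fun j => divDiff (fun y => P.eval y)
    (fun i => if i = 0 then X j else X (i - 1)) 0 r) (n - r) r hinj
  rw [← b]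
  congr 1
  refine (poly_unique X r (n - r) _ _ a ?_ hinj ?_).symm
  · have hmon : (∏ i ∈ Finset.range r, (Polynomial.X - Polynomial.C (X i))).Monic :=
      Polynomial.monic_prod_of_monic _ _ (fun i _ => Polynomial.monic_X_sub_C _)
    rw [Polynomial.natDegree_divByMonic _ hmon,
      Polynomial.natDegree_prod_of_monic _ _ (fun i _ => Polynomial.monic_X_sub_C _)]
    have := Polynomial.natDegree_le_of_degree_le hP
    simp
    omega
  · intro k hk hk'
    rw [c k hk hk']
    exact divDiff_eq_quot P X r (X k) (fun i hi => hXX i k (by omega) (by omega) (by omega)) hY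
end

section
/- Let P be a real polynomial with deg P ≤ n, let 1 ≤ r ≤ n, and let x, x_0, …, x_n be pairwise distinct reals. Then the divided difference P[x, x_0, …, x_{r−1}] equals the Aitken iterate d_{r,r+1,…,n}[x] built from the initial values d_j[x] = P[x_j, x_0, …, x_{r−1}], j = r, …, n; that is, the Aitken iteration reconstructs the divided-difference polynomial exactly, with zero error. -/
open Polynomial in
/-- Aitken/Neville combination of two interpolants. -/
theorem aux_comb (s : Finset ℕ) (v f : ℕ → ℝ) (a b : ℕ) (has : a ∉ s) (hbs : b ∉ s) (hab : a ≠ b)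
    (hinj : Set.InjOn v ↑(insert a (insert b s)))
    (R R0 R1 : ℝ[X]) (hR : R.degree < ((s.card + 2 : ℕ) : WithBot ℕ))
    (h0 : R0.degree < ((s.card + 1 : ℕ) : WithBot ℕ))
    (h1 : R1.degree < ((s.card + 1 : ℕ) : WithBot ℕ))
    (eR : ∀ k ∈ insert a (insert b s), R.eval (v k) = f k)
    (e0 : ∀ k ∈ insert a s, R0.eval (v k) = f k)
    (e1 : ∀ k ∈ insert b s, R1.eval (v k) = f k) :
    C (v b - v a) * R = (C (v b) - X) * R0 - (C (v a) - X) * R1 := by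
  have hcard : (insert a (insert b s)).card = s.card + 2 := by
    rw [Finset.card_insert_of_notMem (by simp [has, hab]), Finset.card_insert_of_notMem hbs]
  have key : ∀ (c : ℝ) (T : ℝ[X]), T.degree < ((s.card + 1 : ℕ) : WithBot ℕ) →
      ((C c - X) * T).degree < ((s.card + 2 : ℕ) : WithBot ℕ) := by
    intro c T hT
    rw [← Polynomial.mem_degreeLT] at *
    rw [Polynomial.mem_degreeLT, Polynomial.degree_lt_iff_coeff_zero] at *
    intro m hm
    obtain ⟨m, rfl⟩ : ∃ k, m = k + 1 := ⟨m - 1, by omega⟩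
    rw [sub_mul, Polynomial.coeff_sub, Polynomial.coeff_C_mul, Polynomial.coeff_X_mul,
      hT _ (by omega), hT _ (by omega)]
    simp
  apply Polynomial.eq_of_degrees_lt_of_eval_index_eq (v := v) (insert a (insert b s)) hinj
  · rw [hcard]
    exact lt_of_le_of_lt (by
      rw [Polynomial.degree_mul]
      calc _ ≤ 0 + R.degree := by gcongr; exact Polynomial.degree_C_le
        _ = R.degree := zero_add _) hR
  · rw [hcard]
    exact lt_of_le_of_lt (Polynomial.degree_sub_le _ _) (max_lt (key _ _ h0) (key _ _ h1))
  · intro k hk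
    have h := eR k hk
    simp only [Polynomial.eval_mul, Polynomial.eval_sub, Polynomial.eval_C, Polynomial.eval_X, h]
    rcases Finset.mem_insert.1 hk with rfl | hk
    · rw [e0 k (by simp)]; ring
    rcases Finset.mem_insert.1 hk with rfl | hk
    · rw [e1 k (by simp)]; ring
    · rw [e0 k (by simp [hk]), e1 k (by simp [hk])]; ring

open Polynomial in
theorem aux_exists (s : Finset ℕ) (v f : ℕ → ℝ) (a : ℕ) (has : a ∉ s)
    (hinj : Set.InjOn v ↑(insert a s)) : ∃ R : ℝ[X], R.degree < ((s.card + 1 : ℕ) : WithBot ℕ) ∧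
      ∀ k ∈ insert a s, R.eval (v k) = f k := by
  refine ⟨Lagrange.interpolate (insert a s) v f, ?_, fun k hk => ?_⟩
  · have := Lagrange.degree_interpolate_lt f hinj
    rwa [Finset.card_insert_of_notMem has] at this
  · exact Lagrange.eval_interpolate_at_node f hinj hk

open Polynomial in
theorem aux_divDiff (f : ℝ → ℝ) (y : ℕ → ℝ) (m : ℕ) : ∀ (i : ℕ) (p : ℝ[X]),
    Set.InjOn y ↑(Finset.Icc i (i + m)) → p.degree < ((m + 1 : ℕ) : WithBot ℕ) →
    (∀ k ∈ Finset.Icc i (i + m), p.eval (y k) = f (y k)) →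
    divDiff f y i (i + m) = p.coeff m := by
  induction m with
  | zero =>
    intro i p hinj hp he
    rw [divDiff]
    simp only [add_zero, le_refl, dite_true]
    rw [← he i (by simp)]
    have : p.degree ≤ 0 := by
      rw [Polynomial.degree_le_iff_coeff_zero]
      rw [Polynomial.degree_lt_iff_coeff_zero] at hp
      intro m hm
      exact hp m (by have : 0 < m := by exact_mod_cast hm
                     omega)
    rw [Polynomial.eq_C_of_degree_le_zero this]; simp
  | succ m ih =>
    intro i p hinj hp he
    have hs : insert i (insert (i + (m + 1)) (Finset.Icc (i + 1) (i + m)))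
        = Finset.Icc i (i + (m + 1)) := by
      ext k; simp only [Finset.mem_insert, Finset.mem_Icc]; omega
    have hs0 : insert i (Finset.Icc (i + 1) (i + m)) = Finset.Icc i (i + m) := by
      ext k; simp only [Finset.mem_insert, Finset.mem_Icc]; omega
    have hs1 : insert (i + (m + 1)) (Finset.Icc (i + 1) (i + m)) = Finset.Icc (i + 1) (i + 1 + m) := by
      ext k; simp only [Finset.mem_insert, Finset.mem_Icc]; omega
    have hc : (Finset.Icc (i + 1) (i + m)).card = m := by simp
    have hi0 : Set.InjOn y ↑(Finset.Icc i (i + m)) := hinj.mono (by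
      intro k; simp only [Finset.coe_Icc, Set.mem_Icc]; omega)
    have hi1 : Set.InjOn y ↑(Finset.Icc (i + 1) (i + 1 + m)) := hinj.mono (by
      intro k; simp only [Finset.coe_Icc, Set.mem_Icc]; omega)
    obtain ⟨R0, d0, e0⟩ := aux_exists (Finset.Icc (i + 1) (i + m)) y (fun k => f (y k)) i
      (by simp) (by rw [hs0]; exact hi0)
    obtain ⟨R1, d1, e1⟩ := aux_exists (Finset.Icc (i + 1) (i + m)) y (fun k => f (y k)) (i + (m + 1))
      (by simp) (by rw [hs1]; exact hi1)
    have hcomb := aux_comb (Finset.Icc (i + 1) (i + m)) y (fun k => f (y k)) i (i + (m + 1))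
      (by simp) (by simp) (by omega) (by rw [hs]; exact hinj) p R0 R1 (by rw [hc]; exact hp)
      d0 d1 (by rw [hs]; exact he) e0 e1
    rw [hc] at d0 d1
    rw [hs0] at e0
    rw [hs1] at e1
    have hne : y (i + (m + 1)) - y i ≠ 0 := by
      rw [sub_ne_zero]
      intro h
      have := hinj (by simp) (by simp) h
      omega
    rw [divDiff, dif_neg (by omega), div_eq_iff hne]
    have q0 := ih i R0 hi0 d0 e0
    have q1 := ih (i + 1) R1 hi1 d1 e1
    have r1 : i + (m + 1) = i + 1 + m := by omega
    have r2 : i + (m + 1) - 1 = i + m := by omega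
    rw [r2, q0]
    conv_lhs => rw [r1, q1]
    have hco := congrArg (fun T => Polynomial.coeff T (m + 1)) hcomb
    simp only [sub_mul (C _) X, Polynomial.coeff_sub, Polynomial.coeff_C_mul,
      Polynomial.coeff_X_mul] at hco
    rw [Polynomial.degree_lt_iff_coeff_zero] at d0 d1
    rw [d0 _ le_rfl, d1 _ le_rfl] at hco
    linarith

open Polynomial in
theorem aux_aitken (X : ℕ → ℝ) (x : ℝ) (g : ℕ → ℝ) (r d : ℕ) : ∀ (j : ℕ) (R : ℝ[X]), r + d < j →
    Set.InjOn X ↑(insert j (Finset.Icc r (r + d))) → R.degree < ((d + 2 : ℕ) : WithBot ℕ) →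
    (∀ k ∈ insert j (Finset.Icc r (r + d)), R.eval (X k) = g k) →
    aitken X x g r (r + d) j = R.eval x := by
  induction d with
  | zero =>
    intro j R hj hinj hR he
    have hne : X j - X r ≠ 0 := by
      rw [sub_ne_zero]
      intro h
      have := hinj (by simp) (by simp) h
      omega
    have hcomb := aux_comb ∅ X g r j (by simp) (by simp) (by omega)
      (hinj.mono (by intro k; simp; tauto)) R (C (g r)) (C (g j)) (by simpa using hR)
      (lt_of_le_of_lt Polynomial.degree_C_le (by simp))
      (lt_of_le_of_lt Polynomial.degree_C_le (by simp))
      (fun k hk => he k (by simp at hk ⊢; tauto))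
      (by simp) (by simp)
    have := congrArg (Polynomial.eval x) hcomb
    simp at this
    rw [aitken, dif_pos (by omega), div_eq_iff hne]
    linarith
  | succ d ih =>
    intro j R hj hinj hR he
    have hc : (Finset.Icc r (r + d)).card = d + 1 := by simp; omega
    have hs : insert (r + (d + 1)) (insert j (Finset.Icc r (r + d)))
        = insert j (Finset.Icc r (r + (d + 1))) := by
      ext k; simp only [Finset.mem_insert, Finset.mem_Icc]; omega
    have hi : Set.InjOn X ↑(insert (r + (d + 1)) (insert j (Finset.Icc r (r + d)))) := by
      rw [hs]; exact hinj
    have hi0 : Set.InjOn X ↑(insert (r + (d + 1)) (Finset.Icc r (r + d))) :=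
      hi.mono (by intro k; simp; tauto)
    have hi1 : Set.InjOn X ↑(insert j (Finset.Icc r (r + d))) :=
      hi.mono (by intro k; simp; tauto)
    have n0 : r + (d + 1) ∉ Finset.Icc r (r + d) := by simp
    have n1 : j ∉ Finset.Icc r (r + d) := by simp; omega
    obtain ⟨R0, d0, e0⟩ := aux_exists _ X g _ n0 hi0
    obtain ⟨R1, d1, e1⟩ := aux_exists _ X g _ n1 hi1
    have hcomb := aux_comb _ X g _ _ n0 n1 (by omega) hi R R0 R1 (by rw [hc]; exact hR) d0 d1
      (by rw [hs]; exact he) e0 e1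
    rw [hc] at d0 d1
    have q0 := ih _ R0 (by omega) hi0 d0 e0
    have q1 := ih _ R1 (by omega) hi1 d1 e1
    have hne : X j - X (r + (d + 1)) ≠ 0 := by
      rw [sub_ne_zero]
      intro h
      have := hinj (by simp) (by simp) h
      omega
    have r2 : r + (d + 1) - 1 = r + d := by omega
    rw [aitken, dif_neg (by omega), div_eq_iff hne, r2, q0, q1]
    have := congrArg (Polynomial.eval x) hcomb
    simp at this
    linarith

open Polynomial in
theorem aux_quot (r : ℕ) (P : ℝ[X]) (X : ℕ → ℝ) (t : ℝ) (ht : ∀ i < r, X i ≠ t)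
    (hXX : ∀ i j, i < r → j < r → i ≠ j → X i ≠ X j) :
    divDiff (fun y => P.eval y) (fun i => if i = 0 then t else X (i - 1)) 0 r
      = (P /ₘ (∏ i ∈ Finset.range r, (Polynomial.X - C (X i)))).eval t := by
  set W : ℝ[X] := ∏ i ∈ Finset.range r, (Polynomial.X - C (X i)) with hW
  have hm : W.Monic := Polynomial.monic_prod_of_monic _ _ fun i _ => Polynomial.monic_X_sub_C _
  have hd : W.natDegree = r := by
    rw [hW, Polynomial.natDegree_prod_of_monic _ _ fun i _ => Polynomial.monic_X_sub_C _]
    simp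
  have hdeg : W.degree = (r : WithBot ℕ) := by
    rw [Polynomial.degree_eq_natDegree hm.ne_zero, hd]
  have hev : ∀ i < r, W.eval (X i) = 0 := by
    intro i hi
    rw [hW, Polynomial.eval_prod]
    exact Finset.prod_eq_zero (Finset.mem_range.2 hi) (by simp)
  have hPe : ∀ z, P.eval z = (P %ₘ W).eval z + W.eval z * (P /ₘ W).eval z := by
    intro z
    conv_lhs => rw [← Polynomial.modByMonic_add_div P W]
    simp
  have hmod : (P %ₘ W).degree < (r : WithBot ℕ) := hdeg ▸ Polynomial.degree_modByMonic_lt P hm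
  have hmod0 := (Polynomial.degree_lt_iff_coeff_zero _ _).1 hmod
  have h := aux_divDiff (fun y => P.eval y) (fun i => if i = 0 then t else X (i - 1)) r 0
    (P %ₘ W + C ((P /ₘ W).eval t) * W) ?_ ?_ ?_
  · rw [zero_add] at h
    rw [h, Polynomial.coeff_add, Polynomial.coeff_C_mul, hmod0 r le_rfl]
    have : W.coeff r = 1 := by rw [← hd]; exact hm
    rw [this]; ring
  · intro a ha b hb hab
    simp at ha hb hab
    by_contra hne
    split_ifs at hab with h1 h2 h2
    · omega
    · exact ht (b - 1) (by omega) hab.symm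
    · exact ht (a - 1) (by omega) hab
    · exact hXX (a - 1) (b - 1) (by omega) (by omega) (by omega) hab
  · rw [Polynomial.degree_lt_iff_coeff_zero]
    intro k hk
    rw [Polynomial.coeff_add, Polynomial.coeff_C_mul, hmod0 k (by omega),
      Polynomial.coeff_eq_zero_of_natDegree_lt (p := W) (by omega)]
    simp
  · intro k hk
    simp at hk
    simp only [Polynomial.eval_add, Polynomial.eval_mul, Polynomial.eval_C]
    split_ifs with h0
    · rw [hPe t]; ring
    · rw [hPe (X (k - 1)), hev (k - 1) (by omega)]; ring

theorem stmt_13 (n r : ℕ) (hr : 1 ≤ r) (hrn : r ≤ n)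
    (P : Polynomial ℝ) (hP : P.degree ≤ (n : WithBot ℕ)) (x : ℝ) (X : ℕ → ℝ)
    (hxX : ∀ i ≤ n, X i ≠ x)
    (hXX : ∀ i j, i ≤ n → j ≤ n → i ≠ j → X i ≠ X j) :
    divDiff (fun y => P.eval y) (fun i => if i = 0 then x else X (i - 1)) 0 r = aitkenLast X x (fun j => divDiff (fun y => P.eval y) (fun i => if i = 0 then X j else X (i - 1)) 0 r) r n := by
  have hx := aux_quot r P X x (fun i hi => hxX i (by omega))
    (fun i j hi hj h => hXX i j (by omega) (by omega) h)
  have hg : ∀ j, r ≤ j → j ≤ n → divDiff (fun y => P.eval y)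
      (fun i => if i = 0 then X j else X (i - 1)) 0 r = _ := fun j h1 h2 =>
    aux_quot r P X (X j) (fun i hi => hXX i j (by omega) (by omega) (by omega))
      (fun i j hi hj h => hXX i j (by omega) (by omega) h)
  rw [hx]
  set W : Polynomial ℝ := ∏ i ∈ Finset.range r, (Polynomial.X - Polynomial.C (X i)) with hW
  have hm : W.Monic := Polynomial.monic_prod_of_monic _ _ fun i _ => Polynomial.monic_X_sub_C _
  have hd : W.natDegree = r := by
    rw [hW, Polynomial.natDegree_prod_of_monic _ _ fun i _ => Polynomial.monic_X_sub_C _]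
    simp
  have hQ : (P.divByMonic W).natDegree ≤ n - r := by
    rw [Polynomial.natDegree_divByMonic P hm, hd]
    have := Polynomial.natDegree_le_of_degree_le hP
    omega
  unfold aitkenLast
  split_ifs with h
  · have hn : n = r := by omega
    beta_reduce
    rw [hg n hrn le_rfl, Polynomial.eq_C_of_natDegree_le_zero (p := P.divByMonic W) (by omega)]
    simp
  · obtain ⟨d, rfl⟩ : ∃ d, n = r + d + 1 := ⟨n - r - 1, by omega⟩
    symm
    apply aux_aitken X x _ r d (r + d + 1) (P.divByMonic W) (by omega)
    · intro a ha b hb hab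
      simp at ha hb
      by_contra hne
      exact hXX a b (by omega) (by omega) hne hab
    · apply lt_of_le_of_lt Polynomial.degree_le_natDegree
      exact_mod_cast (by omega : (P.divByMonic W).natDegree < d + 2)
    · intro k hk
      simp at hk
      exact (hg k (by omega) (by omega)).symm
end
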